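/- arXiv:2401.16787 — 3 statements merged into one kernel-verified Lean document; each statement's English description precedes it below -/
import Mathlib

section
/- F is H-differentiable (Fréchet differentiable along the Cameron–Martin space) at g: as ε → 0, sup over h ∈ H with ‖h‖_H = 1 of |F(g + εh) − F(g) − ε∇_h F(g)| is o(ε). -/
/-!
Differentiability along the Cameron–Martin space follows from the existence of the directional
derivatives `D h` together with one quantitative fact: `F` is Lipschitz for the supremum norm near
`g`, uniformly over `C¹` boundaries with bounded derivative (`exists_layer_bound`).

Given this fact, let `c > 0`. The Cameron–Martin unit sphere is equicontinuous, hence totally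
bounded for the supremum norm, so finitely many polynomials `p` vanishing at `0` form an `η`-net
of it (`exists_polynomial_net`). For `h` within `η` of `p`, the values `F(g + εh)` and `F(g + εp)`
differ by at most `C η |ε|`, because `g + εp` is a `C¹` boundary with controlled derivative. After
division by `ε → 0` the same bound gives `|D h - D p| ≤ C η`. Since the net is finite, the
convergence of the difference quotients is uniform over the net, and the three errors add up to
at most `c |ε|`.

If `b` and `b'` are within `η` of each other, exactly one of them is crossed only if the path stays
below `b + η` and comes within `η` of `b` (`abs_FncF_sub_le`). The layer bound asserts that this
has probability `O(η)`. It is obtained from two supersolutions of the backward equation of `X - b`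
on the region `z = 2η - y ≥ 0`, with `r = √(T + η² - t)`:

* `nearFn = Φ(z/r)`, with `Φ` a scale function with `Φ(u) ≤ u`, dominates up to a constant the
  probability of staying below the boundary. It is of order `η/r` for `z` of order `η`, and bounded
  below at time `T`.
* `η * farFn`, where `farFn = e^{B r} (e^{-k z²/r²}/r + N e^{-c z²/r²})`, is of order at least
  `η/r` for `z` of order `η`, and of order `η` at time `0`. The leading Gaussian is a solution for
  the diffusion coefficient frozen at `(T, b(T))`, where `k = 1/(2σ²)`; the wider Gaussian and the
  factor `e^{B r}` absorb the effect of the variation of `σ` and of the drift.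

A path is evaluated with `farFn` until it first comes close to `b`, and with `nearFn` from then on;
the value is a supermartingale and decreases at the change. In `two_phase_bound` this is carried
out on a fine deterministic time grid, off events of small probability, so that the martingale
problem enters only through increments at deterministic times and no stopping theorem is needed.
-/

open MeasureTheory Set Filter Topology

noncomputable section

variable {Ω : Type*}

/-- Partial derivative in the time variable. -/
def pderivT (f : ℝ → ℝ → ℝ) (s x : ℝ) : ℝ := deriv (fun s' => f s' x) s

/-- Partial derivative in the space variable. -/
def pderivX (f : ℝ → ℝ → ℝ) (s x : ℝ) : ℝ := deriv (f s) x

/-- Second partial derivative in the space variable. -/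
def pderivXX (f : ℝ → ℝ → ℝ) (s x : ℝ) : ℝ := deriv (deriv (f s)) x

/-- The differential operator `L` associated with drift `μ` and diffusion `σ`:
`(Lf)(s,x) = ∂ₛf + μ ∂ₓf + ½σ² ∂ₓₓf`. -/
def genOp (μ σ : ℝ → ℝ → ℝ) (f : ℝ → ℝ → ℝ) (s x : ℝ) : ℝ :=
  pderivT f s x + μ s x * pderivX f s x + (1 / 2) * (σ s x) ^ 2 * pderivXX f s x

/-- `f` belongs to `C^{1,2}(U)`: the derivatives `∂ₛf`, `∂ₓf`, `∂ₓₓf` exist and are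
continuous on `U`. -/
def C12On (f : ℝ → ℝ → ℝ) (U : Set (ℝ × ℝ)) : Prop :=
  (∀ p ∈ U, DifferentiableAt ℝ (fun s => f s p.2) p.1) ∧
  (∀ p ∈ U, DifferentiableAt ℝ (f p.1) p.2) ∧
  (∀ p ∈ U, DifferentiableAt ℝ (deriv (f p.1)) p.2) ∧
  ContinuousOn (fun p : ℝ × ℝ => pderivT f p.1 p.2) U ∧
  ContinuousOn (fun p : ℝ × ℝ => pderivX f p.1 p.2) U ∧
  ContinuousOn (fun p : ℝ × ℝ => pderivXX f p.1 p.2) U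

/-- Condition (C1): continuity, positivity of `σ`, linear-growth-type bounds and local
Lipschitz continuity. -/
def CondC1 (T : ℝ) (μ σ : ℝ → ℝ → ℝ) : Prop :=
  ContinuousOn (fun p : ℝ × ℝ => μ p.1 p.2) (Icc 0 T ×ˢ (univ : Set ℝ)) ∧
  ContinuousOn (fun p : ℝ × ℝ => σ p.1 p.2) (Icc 0 T ×ˢ (univ : Set ℝ)) ∧
  (∀ t ∈ Icc (0:ℝ) T, ∀ x : ℝ, 0 < σ t x) ∧
  (∃ K : ℝ, ∀ t ∈ Icc (0:ℝ) T, ∀ x : ℝ,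
    x * μ t x ≤ K * (1 + x ^ 2) ∧ (σ t x) ^ 2 ≤ K * (1 + x ^ 2)) ∧
  (∀ a : ℝ, 0 < a → ∃ Ka : ℝ, ∀ t ∈ Icc (0:ℝ) T, ∀ x ∈ Ioo (-a) a, ∀ y ∈ Ioo (-a) a,
    |μ t x - μ t y| + |(σ t x) ^ 2 - (σ t y) ^ 2| ≤ Ka * |x - y|)

/-- Condition (C2): uniform ellipticity. -/
def CondC2 (T : ℝ) (σ : ℝ → ℝ → ℝ) : Prop :=
  ∃ σ₀ : ℝ, 0 < σ₀ ∧ ∀ t ∈ Icc (0:ℝ) T, ∀ x : ℝ, σ₀ ≤ σ t x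

/-- Hölder continuity on `[0,T] × ℝ` with exponent `α` in space and `α/2` in time. -/
def HolderTX (T α : ℝ) (φ : ℝ → ℝ → ℝ) : Prop :=
  ∃ C : ℝ, ∀ t ∈ Icc (0:ℝ) T, ∀ t' ∈ Icc (0:ℝ) T, ∀ x x' : ℝ,
    |φ t x - φ t' x'| ≤ C * (|x - x'| ^ α + |t - t'| ^ (α / 2))

/-- Condition (C3): boundedness of the coefficients and Hölder continuity of
`μ, ∂ₓμ, σ, ∂ₜσ, ∂ₓσ, ∂ₓ∂ₜσ, ∂ₓₓσ` with exponent `α` in `x` and `α/2` in `t`. -/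
def CondC3 (T α : ℝ) (μ σ : ℝ → ℝ → ℝ) : Prop :=
  (∃ M : ℝ, ∀ t ∈ Icc (0:ℝ) T, ∀ x : ℝ, |μ t x| ≤ M ∧ |σ t x| ≤ M) ∧
  (∀ t ∈ Icc (0:ℝ) T, ∀ x : ℝ,
    DifferentiableAt ℝ (μ t) x ∧ DifferentiableAt ℝ (σ t) x ∧
    DifferentiableAt ℝ (fun s => σ s x) t ∧ DifferentiableAt ℝ (deriv (σ t)) x ∧
    DifferentiableAt ℝ (fun y => pderivT σ t y) x) ∧
  HolderTX T α μ ∧ HolderTX T α (fun t x => pderivX μ t x) ∧ HolderTX T α σ ∧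
  HolderTX T α (fun t x => pderivT σ t x) ∧ HolderTX T α (fun t x => pderivX σ t x) ∧
  HolderTX T α (fun t x => pderivX (fun s y => pderivT σ s y) t x) ∧
  HolderTX T α (fun t x => pderivXX σ t x)

/-- `M` is a martingale with respect to `(F, P)` over the time set `I`. -/
def MartingaleOn [m : MeasurableSpace Ω] (P : Measure Ω) (F : Filtration ℝ m)
    (M : ℝ → Ω → ℝ) (I : Set ℝ) : Prop :=
  (∀ u ∈ I, StronglyMeasurable[F u] (M u) ∧ Integrable (M u) P) ∧
  ∀ u₁ ∈ I, ∀ u₂ ∈ I, u₁ ≤ u₂ → P[M u₂|F u₁] =ᵐ[P] M u₁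

/-- `X` solves the martingale problem for the generator associated with `μ` and `σ`:
for every compactly supported `f ∈ C^{1,2}`, the process
`u ↦ f(u, X^{s,x}_u) − ∫_s^u (Lf)(r, X^{s,x}_r) dr` is a martingale on `[s,T]`. -/
def SolvesMP [m : MeasurableSpace Ω] (T : ℝ) (μ σ : ℝ → ℝ → ℝ) (P : Measure Ω)
    (F : Filtration ℝ m) (X : ℝ → ℝ → ℝ → Ω → ℝ) : Prop :=
  ∀ s ∈ Icc (0:ℝ) T, ∀ x : ℝ, ∀ f : ℝ → ℝ → ℝ,
    C12On f univ → HasCompactSupport (fun p : ℝ × ℝ => f p.1 p.2) →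
    MartingaleOn P F
      (fun u ω => f u (X s x u ω) - ∫ r in s..u, genOp μ σ f r (X s x r ω)) (Icc s T)

/-- The first hitting time `τ^{s,x}` of the boundary `g`, capped at `T`. -/
def tauF (T : ℝ) (g : ℝ → ℝ) (X : ℝ → ℝ → ℝ → Ω → ℝ) (s x : ℝ) (ω : Ω) : ℝ :=
  sInf ({t | t ∈ Icc s T ∧ g t ≤ X s x t ω} ∪ {T})

/-- The boundary non-crossing probability `v(s,x)`. -/
def vF [MeasurableSpace Ω] (T : ℝ) (g : ℝ → ℝ) (P : Measure Ω)
    (X : ℝ → ℝ → ℝ → Ω → ℝ) (s x : ℝ) : ℝ :=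
  (P {ω | ∀ u ∈ Ico s T, X s x u ω < g u}).toReal

/-- The domain `D_t = {(s,x) : 0 < s < t, x < g(s)}`. -/
def DTset (t : ℝ) (g : ℝ → ℝ) : Set (ℝ × ℝ) := {p | 0 < p.1 ∧ p.1 < t ∧ p.2 < g p.1}

/-- The boundary non-crossing probability functional `F(b)`. -/
def FncF [MeasurableSpace Ω] (T x₀ : ℝ) (P : Measure Ω) (X : ℝ → ℝ → ℝ → Ω → ℝ)
    (b : ℝ → ℝ) : ℝ :=
  (P {ω | ∀ t ∈ Icc (0:ℝ) T, X 0 x₀ t ω < b t}).toReal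

/-- `h` lies in the Cameron–Martin space `H`, with a.e. derivative `ℓ ∈ L²([0,T])`. -/
def InCM (T : ℝ) (h ℓ : ℝ → ℝ) : Prop :=
  Measurable ℓ ∧ IntegrableOn (fun s => ℓ s ^ 2) (Icc 0 T) volume ∧
  ∀ t ∈ Icc (0:ℝ) T, h t = ∫ s in (0:ℝ)..t, ℓ s

/-- Membership in the Cameron–Martin space `H`. -/
def InH (T : ℝ) (h : ℝ → ℝ) : Prop := ∃ ℓ : ℝ → ℝ, InCM T h ℓ

/-- The function `ψ(t) = −E[∂ₓv(t, X_t) 1_{τ > t}]`. -/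
def psiF [MeasurableSpace Ω] (T x₀ : ℝ) (g : ℝ → ℝ) (P : Measure Ω)
    (X : ℝ → ℝ → ℝ → Ω → ℝ) (t : ℝ) : ℝ :=
  -∫ ω, (if t < tauF T g X 0 x₀ ω then pderivX (vF T g P X) t (X 0 x₀ t ω) else 0) ∂P

/-- `N_t = 𝔥(t∧τ, X_{t∧τ})/𝔥(0,x₀)` where `𝔥 = −∂ₓv`. -/
def NtF [MeasurableSpace Ω] (T x₀ : ℝ) (g : ℝ → ℝ) (P : Measure Ω)
    (X : ℝ → ℝ → ℝ → Ω → ℝ) (t : ℝ) (ω : Ω) : ℝ :=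
  -pderivX (vF T g P X) (min t (tauF T g X 0 x₀ ω)) (X 0 x₀ (min t (tauF T g X 0 x₀ ω)) ω) /
    -pderivX (vF T g P X) 0 x₀

/-! ### Sample paths and discrete bookkeeping -/

/-- A process with continuous paths on `[0,T]` is, off a measurable event of small probability,
uniformly continuous with a deterministic modulus. -/
lemma exists_modulus [m : MeasurableSpace Ω] (P : Measure Ω) [IsProbabilityMeasure P]
    (Y : ℝ → Ω → ℝ) (T : ℝ) (hT : 0 < T) (hmeas : ∀ t, Measurable (Y t))
    (hcont : ∀ ω, ContinuousOn (fun t => Y t ω) (Icc 0 T))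
    (η θ : ℝ) (hη : 0 < η) (hθ : 0 < θ) :
    ∃ d > 0, ∃ B : Set Ω, MeasurableSet B ∧ P.real B ≤ θ ∧
      ∀ ω, ω ∉ B → ∀ s ∈ Icc 0 T, ∀ t ∈ Icc 0 T, |s - t| < d → |Y s ω - Y t ω| ≤ η := by
  have : Nonempty (Icc (0:ℝ) T) := ⟨⟨0, le_rfl, hT.le⟩⟩
  let q : ℕ → Icc (0:ℝ) T := TopologicalSpace.denseSeq (Icc (0:ℝ) T)
  have hq : DenseRange q := TopologicalSpace.denseRange_denseSeq _
  let B : ℕ → Set Ω := fun n => ⋃ (i : ℕ) (j : ℕ) (_ : dist (q i) (q j) < 1 / ((n:ℝ) + 1)),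
    {ω | η < |Y (q i) ω - Y (q j) ω|}
  have hBm : ∀ n, MeasurableSet (B n) := fun n =>
    MeasurableSet.iUnion fun i => MeasurableSet.iUnion fun j => MeasurableSet.iUnion fun _ =>
      measurableSet_lt measurable_const (((hmeas _).sub (hmeas _)).abs)
  have hanti : Antitone B := by
    intro n k hnk ω hω
    simp only [B, mem_iUnion] at hω ⊢
    obtain ⟨i, j, hij, h⟩ := hω
    refine ⟨i, j, hij.trans_le ?_, h⟩
    apply one_div_le_one_div_of_le (by positivity)
    have : (n:ℝ) ≤ k := by exact_mod_cast hnk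
    linarith
  have hempty : ⋂ n, B n = ∅ := by
    ext ω
    simp only [mem_iInter, mem_empty_iff_false, iff_false, not_forall]
    have huc := isCompact_Icc.uniformContinuousOn_of_continuous (hcont ω)
    rw [Metric.uniformContinuousOn_iff] at huc
    obtain ⟨δ, hδ, hu⟩ := huc η hη
    obtain ⟨n, hn⟩ := exists_nat_one_div_lt hδ
    refine ⟨n, fun hω => ?_⟩
    simp only [B, mem_iUnion] at hω
    obtain ⟨i, j, hij, h⟩ := hω
    have := hu (q i) (q i).2 (q j) (q j).2 (lt_trans hij hn)
    rw [Real.dist_eq] at this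
    exact absurd h (not_lt.2 this.le)
  have hlim := tendsto_measure_iInter_atTop (μ := P)
    (fun n => (hBm n).nullMeasurableSet) hanti ⟨0, measure_ne_top _ _⟩
  rw [hempty, measure_empty] at hlim
  have hev := hlim.eventually (gt_mem_nhds (ENNReal.ofReal_pos.2 hθ))
  obtain ⟨n, hn⟩ := hev.exists
  refine ⟨1 / ((n:ℝ) + 1), by positivity, B n, hBm n, ?_, ?_⟩
  · exact ENNReal.toReal_le_of_le_ofReal hθ.le hn.le
  intro ω hω s hs t ht hst
  by_contra hcon
  push Not at hcon
  apply hω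
  -- the bad pairs of times form a relatively open set, which meets the dense product sequence
  let y : Icc (0:ℝ) T → ℝ := fun t => Y t ω
  have hy : Continuous y := (hcont ω).domRestrict
  let U : Set (Icc (0:ℝ) T × Icc (0:ℝ) T) :=
    {p | dist p.1 p.2 < 1 / ((n:ℝ) + 1)} ∩ {p | η < |y p.1 - y p.2|}
  have hU : IsOpen U := by
    apply IsOpen.inter
    · exact isOpen_lt (by fun_prop) continuous_const
    · exact isOpen_lt continuous_const (by fun_prop)
  obtain ⟨⟨i, j⟩, hij⟩ := (hq.prodMap hq).exists_mem_open hU ⟨(⟨s, hs⟩, ⟨t, ht⟩), hst, hcon⟩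
  simp only [B, mem_iUnion]
  exact ⟨i, j, hij.1, hij.2⟩

/-- Increments of a martingale have mean zero on events known at the earlier time. -/
lemma MartingaleOn.integral_indicator_incr [m : MeasurableSpace Ω] {P : Measure Ω}
    [IsProbabilityMeasure P]
    {F : Filtration ℝ m} {M : ℝ → Ω → ℝ} {I : Set ℝ} (hM : MartingaleOn P F M I)
    {u₁ u₂ : ℝ} (h₁ : u₁ ∈ I) (h₂ : u₂ ∈ I) (h : u₁ ≤ u₂) {A : Set Ω}
    (hA : MeasurableSet[F u₁] A) :
    Integrable (A.indicator fun ω => M u₂ ω - M u₁ ω) P ∧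
      ∫ ω, A.indicator (fun ω => M u₂ ω - M u₁ ω) ω ∂P = 0 := by
  have i₁ := (hM.1 u₁ h₁).2
  have i₂ := (hM.1 u₂ h₂).2
  have hA' : MeasurableSet A := F.le u₁ _ hA
  refine ⟨(i₂.sub i₁).indicator hA', ?_⟩
  rw [integral_indicator hA', integral_sub i₂.integrableOn i₁.integrableOn,
    ← setIntegral_condExp (F.le u₁) i₂ hA, sub_eq_zero]
  refine setIntegral_congr_ae hA' ?_
  filter_upwards [hM.2 u₁ h₁ u₂ h₂ h] with ω hω _ using hω

open Classical in
/-- Pathwise comparison along a grid. A path starts in phase `q`, moves to phase `w` once `S`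
holds and stops once `D` holds; `zq`, `zw` are martingale increments dominating the increments of
the value functions `q`, `w` up to an error `e`, and the value does not increase at the change of
phase. -/
lemma two_phase_comparison (S D : ℕ → Prop) (hS : ∀ k, S k → S (k+1)) (hD : ∀ k, D k → D (k+1))
    (q w zq zw : ℕ → ℝ) (c e V : ℝ) (hc : 0 ≤ c) (he : 0 ≤ e) (hV : 0 ≤ V) (N : ℕ)
    (hq0 : ¬ S 0 → ¬ D 0 → q 0 ≤ V) (hw0 : S 0 → ¬ D 0 → w 0 ≤ V)
    (hqc : ∀ k < N, ¬ D k → -c ≤ q (k+1)) (hwc : ∀ k < N, ¬ D k → -c ≤ w (k+1))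
    (hzq : ∀ k < N, ¬ D k → q (k+1) - q k - e ≤ zq k)
    (hzw : ∀ k < N, ¬ D k → w (k+1) - w k - e ≤ zw k)
    (htr : ∀ k < N, ¬ S k → S (k+1) → ¬ D (k+1) → w (k+1) ≤ q (k+1)) :
    ∀ n ≤ N, (if D n then -c else if S n then w n else q n) ≤
      V + n * e + ∑ k ∈ Finset.range n,
        ((if ¬ S k ∧ ¬ D k then zq k else 0) + (if S k ∧ ¬ D k then zw k else 0)) := by
  intro n
  induction n with
  | zero =>
    intro _
    simp only [Nat.cast_zero, zero_mul, add_zero, Finset.range_zero, Finset.sum_empty]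
    split_ifs with h1 h2
    · linarith
    · exact hw0 h2 h1
    · exact hq0 h2 h1
  | succ n ih =>
    intro hn
    have hn' : n < N := hn
    have ih := ih hn'.le
    rw [Finset.sum_range_succ]
    push_cast
    by_cases hDn : D n
    · have := hD n hDn
      simp only [hDn, this, if_true, not_true, and_false, if_false, add_zero] at ih ⊢
      linarith
    · by_cases hSn : S n
      · have hS' := hS n hSn
        have h1 := hzw n hn' hDn
        have h2 := hwc n hn' hDn
        simp only [hDn, hSn, if_true, not_true, not_false_iff, and_true, if_false, zero_add] at ih ⊢
        split_ifs <;> linarith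
      · have h1 := hzq n hn' hDn
        have h2 := hqc n hn' hDn
        simp only [hDn, hSn, if_true, not_false_iff, and_true, if_false, add_zero]
          at ih ⊢
        by_cases hD' : D (n+1)
        · simp only [hD', if_true]; linarith
        · by_cases hS' : S (n+1)
          · have h3 := htr n hn' hSn hS' hD'
            simp only [hD', hS', if_true, if_false]; linarith
          · simp only [hD', hS', if_false]; linarith

/-! ### The value function after the path has come close to the boundary -/

/-- Scale function `Φ(u) = ∫₀^u exp(-(v²/2 + a v)/s) dv`. -/
def scaleFn (a s u : ℝ) : ℝ := ∫ v in (0:ℝ)..u, Real.exp (-(v ^ 2 / 2 + a * v) / s)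

/-- The function `Φ((2η - y)/√(T' - t))`, which dominates the probability that the path stays
below the boundary once it has come close to it. -/
def nearFn (a s T' η t y : ℝ) : ℝ := scaleFn a s ((2 * η - y) / √(T' - t))

lemma hasDerivAt_scaleFn (a s u : ℝ) :
    HasDerivAt (scaleFn a s) (Real.exp (-(u ^ 2 / 2 + a * u) / s)) u := by
  have hc : Continuous fun v : ℝ => Real.exp (-(v ^ 2 / 2 + a * v) / s) := by fun_prop
  exact intervalIntegral.integral_hasDerivAt_right (hc.intervalIntegrable _ _)
    (hc.stronglyMeasurableAtFilter _ _) hc.continuousAt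

lemma contDiff_scaleFn (a s : ℝ) : ContDiff ℝ 2 (scaleFn a s) := by
  have h : deriv (scaleFn a s) = fun u => Real.exp (-(u ^ 2 / 2 + a * u) / s) :=
    funext fun u => (hasDerivAt_scaleFn a s u).deriv
  have : ContDiff ℝ (1 + 1) (scaleFn a s) := by
    rw [contDiff_succ_iff_deriv]
    refine ⟨fun u => (hasDerivAt_scaleFn a s u).differentiableAt, by simp, ?_⟩
    rw [h]
    fun_prop
  exact this

lemma scaleFn_mono (a s : ℝ) : StrictMono (scaleFn a s) :=
  strictMono_of_deriv_pos fun u => by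
    rw [(hasDerivAt_scaleFn a s u).deriv]; positivity

lemma scaleFn_zero (a s : ℝ) : scaleFn a s 0 = 0 := by simp [scaleFn]

lemma scaleFn_nonneg (a s : ℝ) {u : ℝ} (hu : 0 ≤ u) : 0 ≤ scaleFn a s u := by
  rw [← scaleFn_zero a s]; exact (scaleFn_mono a s).monotone hu

lemma scaleFn_le (a s : ℝ) (ha : 0 ≤ a) (hs : 0 < s) {u : ℝ} (hu : 0 ≤ u) :
    scaleFn a s u ≤ u := by
  have hc : Continuous fun v : ℝ => Real.exp (-(v ^ 2 / 2 + a * v) / s) := by fun_prop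
  calc scaleFn a s u ≤ ∫ v in (0:ℝ)..u, (1:ℝ) := by
        apply intervalIntegral.integral_mono_on hu (hc.intervalIntegrable _ _) (by simp)
        intro v hv
        rw [Real.exp_le_one_iff]
        have := hv.1
        apply div_nonpos_of_nonpos_of_nonneg _ hs.le
        nlinarith [mul_nonneg ha this, sq_nonneg v]
    _ = u := by simp

lemma contDiffAt_nearFn (a s T' η : ℝ) (p : ℝ × ℝ) (hp : p.1 < T') :
    ContDiffAt ℝ 2 (fun p : ℝ × ℝ => nearFn a s T' η p.1 p.2) p := by
  unfold nearFn
  have h : T' - p.1 ≠ 0 := by linarith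
  have h' : √(T' - p.1) ≠ 0 := (Real.sqrt_pos.2 (by linarith)).ne'
  refine (contDiff_scaleFn a s).contDiffAt.comp p ?_
  refine ContDiffAt.div (by fun_prop) (ContDiffAt.sqrt (by fun_prop) h) h'

lemma nearFn_gen_nonpos (m r₁ σ₀ T' η t y d σ : ℝ) (hσ₀ : 0 < σ₀) (hσ : σ₀ ≤ σ) (hm : |d| ≤ m)
    (ht : t < T') (hr : √(T' - t) ≤ r₁) (hz : 0 ≤ 2 * η - y) :
    pderivT (nearFn (2 * m * r₁) (σ₀ ^ 2) T' η) t y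
      + d * pderivX (nearFn (2 * m * r₁) (σ₀ ^ 2) T' η) t y
      + (1 / 2) * σ ^ 2 * pderivXX (nearFn (2 * m * r₁) (σ₀ ^ 2) T' η) t y ≤ 0 := by
  set a := 2 * m * r₁ with ha
  set r := √(T' - t) with hrdef
  have hρ : 0 < T' - t := by linarith
  have hr0 : 0 < r := Real.sqrt_pos.2 hρ
  have hr2 : r ^ 2 = T' - t := Real.sq_sqrt hρ.le
  have hm0 : 0 ≤ m := (abs_nonneg d).trans hm
  have hT : pderivT (nearFn a (σ₀ ^ 2) T' η) t y =
      Real.exp (-(((2 * η - y) / r) ^ 2 / 2 + a * ((2 * η - y) / r)) / σ₀ ^ 2)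
        * ((2 * η - y) / (2 * r ^ 3)) := by
    have h1 : HasDerivAt (fun t => T' - t) (-1) t := by
      simpa using (hasDerivAt_id t).const_sub T'
    have h2 := h1.sqrt hρ.ne'
    have h3 := (hasDerivAt_const t (2 * η - y)).div h2 (by rw [← hrdef]; exact hr0.ne')
    refine (((hasDerivAt_scaleFn a (σ₀ ^ 2) _).comp t h3).deriv).trans ?_
    rw [← hrdef]
    simp only [Pi.div_apply]
    congr 1
    field_simp
    ring
  have hX1 : ∀ y', HasDerivAt (nearFn a (σ₀ ^ 2) T' η t)
      (Real.exp (-(((2 * η - y') / r) ^ 2 / 2 + a * ((2 * η - y') / r)) / σ₀ ^ 2) * (-1 / r))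
      y' := by
    intro y'
    have h1 : HasDerivAt (fun y => (2 * η - y) / r) (-1 / r) y' := by
      simpa using ((hasDerivAt_id y').const_sub (2 * η)).div_const r
    exact (hasDerivAt_scaleFn a (σ₀ ^ 2) _).comp y' h1
  have hX : deriv (nearFn a (σ₀ ^ 2) T' η t) = fun y' =>
      Real.exp (-(((2 * η - y') / r) ^ 2 / 2 + a * ((2 * η - y') / r)) / σ₀ ^ 2) * (-1 / r) :=
    funext fun y' => (hX1 y').deriv
  have hXX : pderivXX (nearFn a (σ₀ ^ 2) T' η) t y =
      -(Real.exp (-(((2 * η - y) / r) ^ 2 / 2 + a * ((2 * η - y) / r)) / σ₀ ^ 2)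
        * (((2 * η - y) / r + a) / σ₀ ^ 2) / r ^ 2) := by
    unfold pderivXX
    rw [hX]
    have h1 : HasDerivAt (fun y => (2 * η - y) / r) (-1 / r) y := by
      simpa using ((hasDerivAt_id y).const_sub (2 * η)).div_const r
    have h2 := (((((h1.pow 2).div_const 2).add (h1.const_mul a)).neg).div_const (σ₀ ^ 2)).exp
    refine ((h2.mul_const (-1 / r)).deriv).trans ?_
    simp only [Pi.neg_apply, Pi.add_apply, Pi.pow_apply, Nat.cast_ofNat, Nat.add_one_sub_one, pow_one]
    field_simp
    ring
  rw [hT, hXX, pderivX, hX]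
  set u := (2 * η - y) / r with hu
  have hu0 : 0 ≤ u := by positivity
  set E := Real.exp (-(u ^ 2 / 2 + a * u) / σ₀ ^ 2)
  have hE : 0 < E := Real.exp_pos _
  have hz' : 2 * η - y = u * r := by rw [hu]; field_simp
  have key : E * ((2 * η - y) / (2 * r ^ 3)) + d * (E * (-1 / r))
      + 1 / 2 * σ ^ 2 * -(E * ((u + a) / σ₀ ^ 2) / r ^ 2)
      = E / r ^ 2 * (u / 2 - d * r - 1 / 2 * (σ ^ 2 / σ₀ ^ 2) * (u + a)) := by
    rw [hz']; field_simp; ring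
  show E * ((2 * η - y) / (2 * r ^ 3)) + d * (E * (-1 / r))
      + 1 / 2 * σ ^ 2 * -(E * ((u + a) / σ₀ ^ 2) / r ^ 2) ≤ 0
  rw [key]
  apply mul_nonpos_of_nonneg_of_nonpos (by positivity)
  have h1 : 1 ≤ σ ^ 2 / σ₀ ^ 2 := by
    rw [le_div_iff₀ (by positivity)]; nlinarith
  have ha0 : 0 ≤ a := by have := hr0.le.trans hr; positivity
  have h2 : 1 * (u + a) ≤ σ ^ 2 / σ₀ ^ 2 * (u + a) :=
    mul_le_mul_of_nonneg_right h1 (by positivity)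
  have h3 : -(d * r) ≤ m * r₁ := by
    have : |d * r| ≤ m * r₁ := by
      rw [abs_mul, abs_of_pos hr0]; gcongr
    linarith [neg_abs_le (d * r)]
  linarith

/-! ### The value function before the path has come close to the boundary -/

/-- The function `e^{B r} (e^{-k z²/r²}/r + N e^{-c z²/r²})` with `z = 2η - y` and
`r = √(T' - t)`, a parametrix-type bound (up to a factor `η`) for the probability that the path
comes close to the boundary and then stays below it. -/
def farFn (B N k c T' η t y : ℝ) : ℝ :=
  Real.exp (B * √(T' - t)) *
    (Real.exp (-k * ((2 * η - y) / √(T' - t)) ^ 2) / √(T' - t)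
      + N * Real.exp (-c * ((2 * η - y) / √(T' - t)) ^ 2))

lemma farFn_nonneg {N : ℝ} (hN : 0 ≤ N) (B k c T' η t y : ℝ) :
    0 ≤ farFn B N k c T' η t y := by
  unfold farFn; positivity

lemma contDiffAt_farFn (B N k c T' η : ℝ) (p : ℝ × ℝ) (hp : p.1 < T') :
    ContDiffAt ℝ 2 (fun p : ℝ × ℝ => farFn B N k c T' η p.1 p.2) p := by
  unfold farFn
  have h : T' - p.1 ≠ 0 := by linarith
  have h' : √(T' - p.1) ≠ 0 := (Real.sqrt_pos.2 (by linarith)).ne'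
  have h1 : ContDiffAt ℝ 2 (fun p : ℝ × ℝ => √(T' - p.1)) p := ContDiffAt.sqrt (by fun_prop) h
  have h2 : ContDiffAt ℝ 2 (fun p : ℝ × ℝ => (2 * η - p.2) / √(T' - p.1)) p :=
    ContDiffAt.div (by fun_prop) h1 h'
  exact (contDiffAt_const.mul h1).exp.mul
    (((contDiffAt_const.mul (h2.pow 2)).exp.div h1 h').add
      (contDiffAt_const.mul (contDiffAt_const.mul (h2.pow 2)).exp))

/-- The constants `N` and `B` of `farFn` can be chosen uniformly in `k`: for large `u` the second
term is negative and dominates, for bounded `u` the constant `-B/2` does. -/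
lemma exists_farFn_constants (H m r₁ kb c : ℝ) (hH : 0 ≤ H) (hm : 0 ≤ m) (hr : 0 ≤ r₁)
    (hkb : 0 ≤ kb) (hc : 0 < c) :
    ∃ N ≥ 0, ∃ B ≥ 0, ∀ k ∈ Icc (2 * c) kb, ∀ u : ℝ, 0 ≤ u →
      Real.exp (-k * u ^ 2) * (-B / 2 + (H * (1 + u) * (2 * k ^ 2 * u ^ 2 + k) + 2 * m * k * u))
        + N * Real.exp (-c * u ^ 2) * (-c * u ^ 2 + 2 * m * c * r₁ * u + c * u ^ 2 / 2) ≤ 0 := by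
  set P : ℝ → ℝ := fun u => H * (1 + u) * (2 * kb ^ 2 * u ^ 2 + kb) + 2 * m * kb * u with hP
  -- a bound for `P(u) e^{-c u²}` comes from `c² u⁴ / 2 ≤ e^{c u²}`
  obtain ⟨A, hA0, hA⟩ : ∃ A ≥ 0, ∀ u : ℝ, 0 ≤ u → P u ≤ A * (1 + u ^ 4) := by
    refine ⟨4 * (H * (2 * kb ^ 2 + kb) + 2 * m * kb), by positivity, fun u hu => ?_⟩
    have e1 : u ≤ 1 + u ^ 4 := by nlinarith [sq_nonneg (u ^ 2 - 1 / 2), sq_nonneg (u - 1 / 2)]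
    have e2 : u ^ 2 ≤ 1 + u ^ 4 := by nlinarith [sq_nonneg (u ^ 2 - 1 / 2)]
    have e3 : u ^ 3 ≤ 1 + u ^ 4 := by
      nlinarith [sq_nonneg (u ^ 2 - u / 2), sq_nonneg (u ^ 2 - 1 / 2)]
    have e4 : 0 ≤ u ^ 4 := by positivity
    have h1 : (1 + u) * (2 * kb ^ 2 * u ^ 2 + kb) ≤ 4 * (2 * kb ^ 2 + kb) * (1 + u ^ 4) := by
      have f1 : (1 + u) * u ^ 2 ≤ 4 * (1 + u ^ 4) := by nlinarith
      have f2 : (1 + u) ≤ 4 * (1 + u ^ 4) := by nlinarith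
      have g1 := mul_le_mul_of_nonneg_left f1 (by positivity : 0 ≤ 2 * kb ^ 2)
      have g2 := mul_le_mul_of_nonneg_left f2 hkb
      linarith
    have h2 := mul_le_mul_of_nonneg_left h1 hH
    have h3 := mul_le_mul_of_nonneg_left e1 (by positivity : 0 ≤ 2 * m * kb)
    have h4 : 0 ≤ 2 * m * kb * (1 + u ^ 4) := by positivity
    simp only [hP]
    linarith
  obtain ⟨N, hN0, hN⟩ : ∃ N ≥ 0, ∀ u : ℝ, 0 ≤ u → P u ≤ N * Real.exp (c * u ^ 2) := by
    refine ⟨A * (1 + 2 / c ^ 2), by positivity, fun u hu => (hA u hu).trans ?_⟩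
    have h1 := Real.quadratic_le_exp_of_nonneg (show 0 ≤ c * u ^ 2 by positivity)
    have h2 : u ^ 4 ≤ 2 / c ^ 2 * Real.exp (c * u ^ 2) := by
      rw [div_mul_eq_mul_div, le_div_iff₀ (by positivity)]
      nlinarith [mul_nonneg hc.le (sq_nonneg u)]
    have h3 : 1 ≤ Real.exp (c * u ^ 2) := Real.one_le_exp (by positivity)
    calc A * (1 + u ^ 4) ≤ A * (Real.exp (c * u ^ 2) + 2 / c ^ 2 * Real.exp (c * u ^ 2)) := by
          gcongr
      _ = _ := by ring
  -- `u₁` is chosen so that the second bracket is at most `-1` for `u ≥ u₁`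
  set u₁ : ℝ := 4 * m * r₁ + 2 / c + 1 with hu₁
  set C₂ : ℝ := 1 + 2 * m * c * r₁ * u₁ with hC₂
  have hu₁0 : 0 ≤ u₁ := by positivity
  have hC₂0 : 0 ≤ C₂ := by positivity
  refine ⟨N, hN0, 2 * N * C₂ * Real.exp (kb * u₁ ^ 2), by positivity, fun k hk u hu => ?_⟩
  have hk0 : 0 ≤ k := by linarith [hk.1]
  have hPk : H * (1 + u) * (2 * k ^ 2 * u ^ 2 + k) + 2 * m * k * u ≤ P u := by
    have := hk.2
    simp only [hP]; gcongr
  set E := Real.exp (-k * u ^ 2) with hE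
  set E' := Real.exp (-c * u ^ 2) with hE'
  have hE0 : 0 < E := Real.exp_pos _
  have hE'0 : 0 < E' := Real.exp_pos _
  -- `e^{-k u²} P(u) ≤ N e^{-c u²}` because `k ≥ 2c`
  have h1 : E * P u ≤ N * E' := by
    calc E * P u ≤ E * (N * Real.exp (c * u ^ 2)) := by gcongr; exact hN u hu
      _ = N * Real.exp (-k * u ^ 2 + c * u ^ 2) := by rw [Real.exp_add]; ring
      _ ≤ N * E' := by
          refine mul_le_mul_of_nonneg_left (Real.exp_le_exp.2 ?_) hN0
          nlinarith [hk.1, sq_nonneg u]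
  have h2 : E * (-(2 * N * C₂ * Real.exp (kb * u₁ ^ 2)) / 2 +
      (H * (1 + u) * (2 * k ^ 2 * u ^ 2 + k) + 2 * m * k * u)) ≤
      N * E' - N * C₂ * (E * Real.exp (kb * u₁ ^ 2)) := by
    have := mul_le_mul_of_nonneg_left hPk hE0.le
    linarith
  rcases le_total u u₁ with hu' | hu'
  · have h3 : 1 ≤ E * Real.exp (kb * u₁ ^ 2) := by
      rw [hE, ← Real.exp_add]
      apply Real.one_le_exp
      have : k * u ^ 2 ≤ kb * u₁ ^ 2 := by
        have := hk.2
        gcongr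
      linarith
    have h4 : E' ≤ 1 := by
      rw [hE', Real.exp_le_one_iff]; nlinarith [sq_nonneg u]
    have h5 : -c * u ^ 2 + 2 * m * c * r₁ * u + c * u ^ 2 / 2 ≤ C₂ - 1 := by
      have : 2 * m * c * r₁ * u ≤ 2 * m * c * r₁ * u₁ := by gcongr
      have : 0 ≤ c * u ^ 2 := by positivity
      simp only [hC₂]
      linarith
    have h6 : N * E' * (-c * u ^ 2 + 2 * m * c * r₁ * u + c * u ^ 2 / 2) ≤
        N * E' * (C₂ - 1) := by gcongr
    have h7 : N * C₂ * 1 ≤ N * C₂ * (E * Real.exp (kb * u₁ ^ 2)) := by gcongr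
    have h8 : N * C₂ * E' ≤ N * C₂ * 1 := by gcongr
    linarith
  · have h5 : -c * u ^ 2 + 2 * m * c * r₁ * u + c * u ^ 2 / 2 ≤ -1 := by
      have e1 : c * u₁ = 4 * m * c * r₁ + 2 + c := by rw [hu₁]; field_simp
      have e2 : c * u₁ ≤ c * u := by gcongr
      have e3 : 1 ≤ u := by
        have : 1 ≤ u₁ := by rw [hu₁]; have : 0 ≤ 4 * m * r₁ + 2 / c := by positivity
                            linarith
        linarith
      nlinarith [mul_nonneg hu (sub_nonneg.2 e2)]
    have h6 : N * E' * (-c * u ^ 2 + 2 * m * c * r₁ * u + c * u ^ 2 / 2) ≤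
        N * E' * (-1) := by gcongr
    have h7 : 0 ≤ N * C₂ * (E * Real.exp (kb * u₁ ^ 2)) := by positivity
    linarith

lemma farFn_pderivs (B N k c T' η t y r u : ℝ) (ht : t < T') (hrdef : r = √(T' - t))
    (hz' : 2 * η - y = u * r) :
    pderivT (farFn B N k c T' η) t y =
      Real.exp (B * r) * (-B / (2 * r)) *
        (Real.exp (-k * u ^ 2) / r + N * Real.exp (-c * u ^ 2))
      + Real.exp (B * r) * (Real.exp (-k * u ^ 2) * (-k * u ^ 2 / r ^ 2) / r
        + Real.exp (-k * u ^ 2) / (2 * r ^ 3)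
        + N * (Real.exp (-c * u ^ 2) * (-c * u ^ 2 / r ^ 2))) ∧
    pderivX (farFn B N k c T' η) t y =
      Real.exp (B * r) * (Real.exp (-k * u ^ 2) * (2 * k * u) / r ^ 2
        + N * (Real.exp (-c * u ^ 2) * (2 * c * u / r))) ∧
    pderivXX (farFn B N k c T' η) t y =
      Real.exp (B * r) * (Real.exp (-k * u ^ 2) * (4 * k ^ 2 * u ^ 2 - 2 * k) / r ^ 3
        + N * (Real.exp (-c * u ^ 2) * (4 * c ^ 2 * u ^ 2 - 2 * c) / r ^ 2)) := by
  have hρ : 0 < T' - t := by linarith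
  have hr0 : 0 < r := hrdef ▸ Real.sqrt_pos.2 hρ
  have hsq : HasDerivAt (fun t => √(T' - t)) (-1 / (2 * r)) t := by
    have h1 : HasDerivAt (fun t => T' - t) (-1) t := by
      simpa using (hasDerivAt_id t).const_sub T'
    rw [hrdef]
    exact h1.sqrt hρ.ne'
  have hu : (2 * η - y) / r = u := by rw [hz']; field_simp
  refine ⟨?_, ?_⟩
  · have h3 := (hasDerivAt_const t (2 * η - y)).div hsq (by rw [← hrdef]; exact hr0.ne')
    have h4 := (hsq.const_mul B).exp.mul
      (((((h3.pow 2).const_mul (-k)).exp).div hsq (by rw [← hrdef]; exact hr0.ne')).add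
        ((((h3.pow 2).const_mul (-c)).exp).const_mul N))
    refine (h4.deriv).trans ?_
    simp only [Pi.div_apply, Pi.add_apply, Pi.pow_apply, Nat.cast_ofNat, Nat.add_one_sub_one,
      pow_one, ← hrdef, hu]
    rw [hz']
    generalize Real.exp (-k * u ^ 2) = E1
    generalize Real.exp (-c * u ^ 2) = E2
    field_simp
    ring
  have hX1 : ∀ y', HasDerivAt (farFn B N k c T' η t)
      (Real.exp (B * r) *
        (Real.exp (-k * ((2 * η - y') / r) ^ 2) * (2 * k * ((2 * η - y') / r)) / r ^ 2
        + N * (Real.exp (-c * ((2 * η - y') / r) ^ 2) * (2 * c * ((2 * η - y') / r) / r))))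
      y' := by
    intro y'
    have h1 : HasDerivAt (fun y => (2 * η - y) / r) (-1 / r) y' := by
      simpa using ((hasDerivAt_id y').const_sub (2 * η)).div_const r
    have h4 := ((((((h1.pow 2).const_mul (-k)).exp).div_const r).add
        ((((h1.pow 2).const_mul (-c)).exp).const_mul N)).const_mul (Real.exp (B * r)))
    have h5 := h4.congr_deriv (g' := Real.exp (B * r) *
        (Real.exp (-k * ((2 * η - y') / r) ^ 2) * (2 * k * ((2 * η - y') / r)) / r ^ 2
        + N * (Real.exp (-c * ((2 * η - y') / r) ^ 2) * (2 * c * ((2 * η - y') / r) / r)))) (by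
      simp only [Pi.pow_apply, Nat.cast_ofNat, Nat.add_one_sub_one, pow_one]
      ring)
    rw [hrdef] at h5 ⊢
    exact h5
  have hX := funext fun y' => (hX1 y').deriv
  refine ⟨?_, ?_⟩
  · have := (hX1 y).deriv
    rw [hu] at this
    exact this
  · unfold pderivXX
    rw [hX]
    have h1 : HasDerivAt (fun y => (2 * η - y) / r) (-1 / r) y := by
      simpa using ((hasDerivAt_id y).const_sub (2 * η)).div_const r
    have h4 := ((((((h1.pow 2).const_mul (-k)).exp).mul (h1.const_mul (2 * k))).div_const
      (r ^ 2)).add (((((h1.pow 2).const_mul (-c)).exp).mul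
        ((h1.const_mul (2 * c)).div_const r)).const_mul N)).const_mul (Real.exp (B * r))
    refine (h4.deriv).trans ?_
    simp only [Pi.pow_apply, Nat.cast_ofNat, Nat.add_one_sub_one, pow_one, hu]
    generalize Real.exp (-k * u ^ 2) = E1
    generalize Real.exp (-c * u ^ 2) = E2
    field_simp
    ring

lemma farFn_gen_nonpos (H m r₁ k c B N Λ s T' η t y d σ : ℝ) (hN : 0 ≤ N) (hB : 0 ≤ B)
    (hk : 2 * k * s ^ 2 = 1) (hk0 : 0 ≤ k) (hc : 4 * Λ ^ 2 * c = 1) (hc0 : 0 ≤ c)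
    (hσ : σ ^ 2 ≤ Λ ^ 2) (hm : |d| ≤ m) (ht : t < T') (hr : √(T' - t) ≤ r₁)
    (hz : 0 ≤ 2 * η - y) (hs : |σ ^ 2 - s ^ 2| ≤ H * (√(T' - t) + (2 * η - y)))
    (hBN : ∀ u : ℝ, 0 ≤ u →
      Real.exp (-k * u ^ 2) * (-B / 2 + (H * (1 + u) * (2 * k ^ 2 * u ^ 2 + k) + 2 * m * k * u))
        + N * Real.exp (-c * u ^ 2) * (-c * u ^ 2 + 2 * m * c * r₁ * u + c * u ^ 2 / 2) ≤ 0) :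
    pderivT (farFn B N k c T' η) t y + d * pderivX (farFn B N k c T' η) t y
      + (1 / 2) * σ ^ 2 * pderivXX (farFn B N k c T' η) t y ≤ 0 := by
  set r := √(T' - t) with hrdef
  have hρ : 0 < T' - t := by linarith
  have hr0 : 0 < r := Real.sqrt_pos.2 hρ
  have hm0 : 0 ≤ m := (abs_nonneg d).trans hm
  set u := (2 * η - y) / r with hu
  have hu0 : 0 ≤ u := by positivity
  have hz' : 2 * η - y = u * r := by rw [hu]; field_simp
  obtain ⟨hT, hX', hXX⟩ := farFn_pderivs B N k c T' η t y r u ht hrdef hz'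
  set E1 := Real.exp (-k * u ^ 2)
  set E2 := Real.exp (-c * u ^ 2)
  set E0 := Real.exp (B * r)
  rw [hT, hXX, hX']
  have key : E0 * (-B / (2 * r)) * (E1 / r + N * E2)
      + E0 * (E1 * (-k * u ^ 2 / r ^ 2) / r + E1 / (2 * r ^ 3) + N * (E2 * (-c * u ^ 2 / r ^ 2)))
      + d * (E0 * (E1 * (2 * k * u) / r ^ 2 + N * (E2 * (2 * c * u / r))))
      + 1 / 2 * σ ^ 2 * (E0 * (E1 * (4 * k ^ 2 * u ^ 2 - 2 * k) / r ^ 3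
        + N * (E2 * (4 * c ^ 2 * u ^ 2 - 2 * c) / r ^ 2)))
      = E0 / r ^ 2 * (E1 / r * (-B * r / 2 + 1 / 2 - k * u ^ 2 + σ ^ 2 * (2 * k ^ 2 * u ^ 2 - k)
          + 2 * d * k * u * r)
        + N * E2 * (-B * r / 2 - c * u ^ 2 + 2 * d * c * u * r + σ ^ 2 * (2 * c ^ 2 * u ^ 2 - c)))
      := by
    field_simp; ring
  rw [key]
  apply mul_nonpos_of_nonneg_of_nonpos (by positivity)
  refine le_trans ?_ (hBN u hu0)
  have hdr : d ≤ m := (le_abs_self d).trans hm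
  -- the leading terms cancel because `k = 1/(2 s²)`
  have b1 : -B * r / 2 + 1 / 2 - k * u ^ 2 + σ ^ 2 * (2 * k ^ 2 * u ^ 2 - k) + 2 * d * k * u * r
      ≤ r * (-B / 2 + (H * (1 + u) * (2 * k ^ 2 * u ^ 2 + k) + 2 * m * k * u)) := by
    have e1 : 1 / 2 - k * u ^ 2 = -(s ^ 2 * (2 * k ^ 2 * u ^ 2 - k)) := by
      linear_combination (k * u ^ 2 - 1 / 2) * hk
    have e2 : (σ ^ 2 - s ^ 2) * (2 * k ^ 2 * u ^ 2 - k) ≤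
        H * (r + u * r) * (2 * k ^ 2 * u ^ 2 + k) := by
      refine (le_abs_self _).trans ?_
      rw [abs_mul]
      rw [hz'] at hs
      refine mul_le_mul hs ?_ (abs_nonneg _) ((abs_nonneg _).trans hs)
      have := mul_nonneg (sq_nonneg k) (sq_nonneg u)
      rw [abs_le]
      constructor <;> linarith
    have e3 : d * (k * u * r) ≤ m * (k * u * r) :=
      mul_le_mul_of_nonneg_right hdr (by positivity)
    linarith
  have b2 : -B * r / 2 - c * u ^ 2 + 2 * d * c * u * r + σ ^ 2 * (2 * c ^ 2 * u ^ 2 - c) ≤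
      -c * u ^ 2 + 2 * m * c * r₁ * u + c * u ^ 2 / 2 := by
    have e1 : d * (c * u * r) ≤ m * (c * u * r₁) := by
      have : d * (c * u * r) ≤ m * (c * u * r) := by gcongr
      refine this.trans (by gcongr)
    have e2 : σ ^ 2 * (2 * c ^ 2 * u ^ 2) ≤ Λ ^ 2 * (2 * c ^ 2 * u ^ 2) := by gcongr
    have e3 : Λ ^ 2 * (2 * c ^ 2 * u ^ 2) = c * u ^ 2 / 2 := by
      linear_combination (c * u ^ 2 / 2) * hc
    have e4 : 0 ≤ B * r := by positivity
    have e5 : 0 ≤ σ ^ 2 * c := by positivity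
    linarith
  have c1 : E1 / r * (-B * r / 2 + 1 / 2 - k * u ^ 2 + σ ^ 2 * (2 * k ^ 2 * u ^ 2 - k)
      + 2 * d * k * u * r) ≤
      E1 * (-B / 2 + (H * (1 + u) * (2 * k ^ 2 * u ^ 2 + k) + 2 * m * k * u)) := by
    calc _ ≤ E1 / r * (r * (-B / 2 + (H * (1 + u) * (2 * k ^ 2 * u ^ 2 + k) + 2 * m * k * u))) := by
          gcongr
      _ = _ := by field_simp
  have c2 := mul_le_mul_of_nonneg_left b2 (by positivity : 0 ≤ N * E2)
  linarith

/-! ### Smooth functions of time and space, and the martingale problem -/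

section Smooth

variable {φ : ℝ → ℝ → ℝ}

lemma pderivT_eq_fderiv {n : WithTop ℕ∞} (hn : n ≠ 0)
    (h : ContDiff ℝ n (fun p : ℝ × ℝ => φ p.1 p.2)) (t y : ℝ) :
    HasDerivAt (fun s => φ s y) (pderivT φ t y) t ∧
      pderivT φ t y = fderiv ℝ (fun p : ℝ × ℝ => φ p.1 p.2) (t, y) (1, 0) := by
  have h1 := (h.differentiable hn (t, y)).hasFDerivAt
  have h2 : HasDerivAt (fun s : ℝ => (s, y)) ((1 : ℝ), (0 : ℝ)) t :=
    (hasDerivAt_id t).prodMk (hasDerivAt_const t y)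
  have h3 := h1.comp_hasDerivAt t h2
  have h4 : pderivT φ t y = _ := h3.deriv
  exact ⟨h4 ▸ h3, h4⟩

lemma pderivX_eq_fderiv {n : WithTop ℕ∞} (hn : n ≠ 0)
    (h : ContDiff ℝ n (fun p : ℝ × ℝ => φ p.1 p.2)) (t y : ℝ) :
    HasDerivAt (φ t) (pderivX φ t y) y ∧
      pderivX φ t y = fderiv ℝ (fun p : ℝ × ℝ => φ p.1 p.2) (t, y) (0, 1) := by
  have h1 := (h.differentiable hn (t, y)).hasFDerivAt
  have h2 : HasDerivAt (fun s : ℝ => (t, s)) ((0 : ℝ), (1 : ℝ)) y :=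
    (hasDerivAt_const y t).prodMk (hasDerivAt_id y)
  have h3 := h1.comp_hasDerivAt y h2
  have h4 : pderivX φ t y = _ := h3.deriv
  exact ⟨h4 ▸ h3, h4⟩

lemma contDiff_pderivT (h : ContDiff ℝ 2 (fun p : ℝ × ℝ => φ p.1 p.2)) :
    ContDiff ℝ 1 (fun p : ℝ × ℝ => pderivT φ p.1 p.2) := by
  have : (fun p : ℝ × ℝ => pderivT φ p.1 p.2) =
      fun p => fderiv ℝ (fun p : ℝ × ℝ => φ p.1 p.2) p (1, 0) :=
    funext fun p => (pderivT_eq_fderiv two_ne_zero h p.1 p.2).2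
  rw [this]
  exact (h.fderiv_right (m := 1) (by norm_num)).clm_apply contDiff_const

lemma contDiff_pderivX (h : ContDiff ℝ 2 (fun p : ℝ × ℝ => φ p.1 p.2)) :
    ContDiff ℝ 1 (fun p : ℝ × ℝ => pderivX φ p.1 p.2) := by
  have : (fun p : ℝ × ℝ => pderivX φ p.1 p.2) =
      fun p => fderiv ℝ (fun p : ℝ × ℝ => φ p.1 p.2) p (0, 1) :=
    funext fun p => (pderivX_eq_fderiv two_ne_zero h p.1 p.2).2
  rw [this]
  exact (h.fderiv_right (m := 1) (by norm_num)).clm_apply contDiff_const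

lemma continuous_pderivXX (h : ContDiff ℝ 2 (fun p : ℝ × ℝ => φ p.1 p.2)) :
    Continuous (fun p : ℝ × ℝ => pderivXX φ p.1 p.2) := by
  have h1 := contDiff_pderivX h
  have : (fun p : ℝ × ℝ => pderivXX φ p.1 p.2) =
      fun p => fderiv ℝ (fun p : ℝ × ℝ => pderivX φ p.1 p.2) p (0, 1) :=
    funext fun p => (pderivX_eq_fderiv (φ := pderivX φ) one_ne_zero h1 p.1 p.2).2
  rw [this]
  exact (h1.continuous_fderiv one_ne_zero).clm_apply continuous_const

lemma exists_pderiv_bound (h : ContDiff ℝ 2 (fun p : ℝ × ℝ => φ p.1 p.2))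
    (hs : HasCompactSupport (fun p : ℝ × ℝ => φ p.1 p.2)) :
    ∃ K ≥ 0, ∀ t y, |φ t y| ≤ K ∧ |pderivT φ t y| ≤ K ∧ |pderivX φ t y| ≤ K ∧
      |pderivXX φ t y| ≤ K := by
  have hsX : HasCompactSupport (fun p : ℝ × ℝ => pderivX φ p.1 p.2) := by
    have := (hs.fderiv (𝕜 := ℝ)).comp_left (g := fun L : ℝ × ℝ →L[ℝ] ℝ => L (0, 1)) (by simp)
    convert this using 2 with p
    exact (pderivX_eq_fderiv two_ne_zero h p.1 p.2).2
  obtain ⟨K1, h1⟩ := hs.exists_bound_of_continuous h.continuous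
  obtain ⟨K2, h2⟩ := (hs.fderiv (𝕜 := ℝ)).exists_bound_of_continuous
    (h.continuous_fderiv two_ne_zero)
  obtain ⟨K3, h3⟩ := (hsX.fderiv (𝕜 := ℝ)).exists_bound_of_continuous
    ((contDiff_pderivX h).continuous_fderiv one_ne_zero)
  have hn1 : ‖((1:ℝ), (0:ℝ))‖ = 1 := by simp [Prod.norm_def]
  have hn2 : ‖((0:ℝ), (1:ℝ))‖ = 1 := by simp [Prod.norm_def]
  refine ⟨max K1 (max K2 K3), (norm_nonneg _).trans ((h1 (0, 0)).trans (le_max_left _ _)),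
    fun t y => ⟨?_, ?_, ?_, ?_⟩⟩
  · exact (h1 (t, y)).trans (le_max_left _ _)
  · rw [(pderivT_eq_fderiv two_ne_zero h t y).2, ← Real.norm_eq_abs]
    refine ((ContinuousLinearMap.le_opNorm _ _).trans ?_).trans
      ((le_max_left _ _).trans (le_max_right _ _))
    rw [hn1, mul_one]; exact h2 _
  · rw [(pderivX_eq_fderiv two_ne_zero h t y).2, ← Real.norm_eq_abs]
    refine ((ContinuousLinearMap.le_opNorm _ _).trans ?_).trans
      ((le_max_left _ _).trans (le_max_right _ _))
    rw [hn2, mul_one]; exact h2 _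
  · have e : pderivXX φ t y = _ :=
      (pderivX_eq_fderiv (φ := pderivX φ) one_ne_zero (contDiff_pderivX h) t y).2
    rw [e, ← Real.norm_eq_abs]
    refine ((ContinuousLinearMap.le_opNorm _ _).trans ?_).trans
      ((le_max_right _ _).trans (le_max_right _ _))
    rw [hn2, mul_one]; exact h3 _

variable {b : ℝ → ℝ}

lemma shifted_pderivs (h : ContDiff ℝ 2 (fun p : ℝ × ℝ => φ p.1 p.2)) (hb : ContDiff ℝ 1 b)
    (t x : ℝ) :
    HasDerivAt (fun s => φ s (x - b s))
      (pderivT φ t (x - b t) - deriv b t * pderivX φ t (x - b t)) t ∧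
    HasDerivAt (fun x => φ t (x - b t)) (pderivX φ t (x - b t)) x ∧
    HasDerivAt (deriv fun x => φ t (x - b t)) (pderivXX φ t (x - b t)) x := by
  have hX : ∀ x, HasDerivAt (fun x => φ t (x - b t)) (pderivX φ t (x - b t)) x := fun x =>
    HasDerivAt.comp_sub_const x (b t) (pderivX_eq_fderiv two_ne_zero h t (x - b t)).1
  refine ⟨?_, hX x, ?_⟩
  · have h1 := (h.differentiable two_ne_zero (t, x - b t)).hasFDerivAt
    have hb' := (hb.differentiable one_ne_zero t).hasDerivAt
    have h2 : HasDerivAt (fun s : ℝ => (s, x - b s)) ((1 : ℝ), -deriv b t) t :=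
      (hasDerivAt_id t).prodMk (hb'.const_sub x)
    refine (h1.comp_hasDerivAt t h2).congr_deriv ?_
    rw [(pderivT_eq_fderiv two_ne_zero h t (x - b t)).2,
      (pderivX_eq_fderiv two_ne_zero h t (x - b t)).2]
    have : ((1 : ℝ), -deriv b t) = ((1:ℝ), (0:ℝ)) - deriv b t • ((0:ℝ), (1:ℝ)) := by
      ext <;> simp
    rw [this, map_sub, map_smul, smul_eq_mul]
  · have : (deriv fun x => φ t (x - b t)) = fun x => pderivX φ t (x - b t) :=
      funext fun x => (hX x).deriv
    rw [this]
    exact HasDerivAt.comp_sub_const x (b t)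
      (pderivX_eq_fderiv (φ := pderivX φ) one_ne_zero (contDiff_pderivX h) t (x - b t)).1

lemma c12On_shifted (h : ContDiff ℝ 2 (fun p : ℝ × ℝ => φ p.1 p.2)) (hb : ContDiff ℝ 1 b) :
    C12On (fun t x => φ t (x - b t)) univ := by
  have hc : Continuous fun p : ℝ × ℝ => (p.1, p.2 - b p.1) := by
    have := hb.continuous
    fun_prop
  have hb' : Continuous fun p : ℝ × ℝ => deriv b p.1 :=
    (hb.continuous_deriv le_rfl).comp continuous_fst
  refine ⟨fun p _ => (shifted_pderivs h hb p.1 p.2).1.differentiableAt,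
    fun p _ => (shifted_pderivs h hb p.1 p.2).2.1.differentiableAt,
    fun p _ => (shifted_pderivs h hb p.1 p.2).2.2.differentiableAt, ?_, ?_, ?_⟩
  · refine Continuous.continuousOn ?_
    have : (fun p : ℝ × ℝ => pderivT (fun t x => φ t (x - b t)) p.1 p.2) = fun p =>
        pderivT φ p.1 (p.2 - b p.1) - deriv b p.1 * pderivX φ p.1 (p.2 - b p.1) :=
      funext fun p => (shifted_pderivs h hb p.1 p.2).1.deriv
    rw [this]
    exact ((contDiff_pderivT h).continuous.comp hc).sub
      (hb'.mul ((contDiff_pderivX h).continuous.comp hc))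
  · refine Continuous.continuousOn ?_
    have : (fun p : ℝ × ℝ => pderivX (fun t x => φ t (x - b t)) p.1 p.2) = fun p =>
        pderivX φ p.1 (p.2 - b p.1) :=
      funext fun p => (shifted_pderivs h hb p.1 p.2).2.1.deriv
    rw [this]
    exact (contDiff_pderivX h).continuous.comp hc
  · refine Continuous.continuousOn ?_
    have : (fun p : ℝ × ℝ => pderivXX (fun t x => φ t (x - b t)) p.1 p.2) = fun p =>
        pderivXX φ p.1 (p.2 - b p.1) :=
      funext fun p => (shifted_pderivs h hb p.1 p.2).2.2.deriv
    rw [this]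
    exact (continuous_pderivXX h).comp hc

lemma hasCompactSupport_shifted (hs : HasCompactSupport (fun p : ℝ × ℝ => φ p.1 p.2))
    (hb : Continuous b) :
    HasCompactSupport (fun p : ℝ × ℝ => φ p.1 (p.2 - b p.1)) := by
  let e : ℝ × ℝ ≃ₜ ℝ × ℝ :=
    { toFun := fun p => (p.1, p.2 - b p.1)
      invFun := fun p => (p.1, p.2 + b p.1)
      left_inv := fun p => by simp
      right_inv := fun p => by simp
      continuous_toFun := by fun_prop
      continuous_invFun := by fun_prop }
  exact hs.comp_homeomorph e

end Smooth

/-- The generator of the process `X - b`, applied to `φ` and evaluated at time `t` and position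
`y = x - b(t)`. -/
def shiftGen (μ σ : ℝ → ℝ → ℝ) (b : ℝ → ℝ) (φ : ℝ → ℝ → ℝ) (t y : ℝ) : ℝ :=
  pderivT φ t y + (μ t (y + b t) - deriv b t) * pderivX φ t y
    + (1 / 2) * σ t (y + b t) ^ 2 * pderivXX φ t y

/-- The martingale problem applied to `φ(t, x - b(t))`. The increments of `φ(t, X_t - b(t))` exceed
those of a martingale by at most `K` times the elapsed time, and by nothing over time intervals on
which `shiftGen` is nonpositive along the path. -/
lemma exists_martingale [m : MeasurableSpace Ω] (P : Measure Ω)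
    (F : Filtration ℝ m) (T x₀ M Λ G : ℝ) (hT : 0 < T)
    (μ σ : ℝ → ℝ → ℝ)
    (hμc : ContinuousOn (fun p : ℝ × ℝ => μ p.1 p.2) (Icc 0 T ×ˢ (univ : Set ℝ)))
    (hσc : ContinuousOn (fun p : ℝ × ℝ => σ p.1 p.2) (Icc 0 T ×ˢ (univ : Set ℝ)))
    (hμ : ∀ t ∈ Icc (0:ℝ) T, ∀ x, |μ t x| ≤ M) (hσ : ∀ t ∈ Icc (0:ℝ) T, ∀ x, |σ t x| ≤ Λ)
    (X : ℝ → ℝ → ℝ → Ω → ℝ)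
    (hXcont : ∀ s x : ℝ, ∀ ω, ContinuousOn (fun u => X s x u ω) (Icc s T))
    (hXmp : SolvesMP T μ σ P F X) (b : ℝ → ℝ) (hb : ContDiff ℝ 1 b)
    (hbG : ∀ t ∈ Icc (0:ℝ) T, |deriv b t| ≤ G)
    (φ : ℝ → ℝ → ℝ) (h : ContDiff ℝ 2 (fun p : ℝ × ℝ => φ p.1 p.2))
    (hs : HasCompactSupport (fun p : ℝ × ℝ => φ p.1 p.2)) :
    ∃ N : ℝ → Ω → ℝ, MartingaleOn P F N (Icc 0 T) ∧ ∃ K ≥ 0, (∀ t y, |φ t y| ≤ K) ∧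
      (∀ ω, ∀ u₁ ∈ Icc 0 T, ∀ u₂ ∈ Icc 0 T, u₁ ≤ u₂ →
        φ u₂ (X 0 x₀ u₂ ω - b u₂) - φ u₁ (X 0 x₀ u₁ ω - b u₁) - K * (u₂ - u₁)
          ≤ N u₂ ω - N u₁ ω) ∧
      ∀ ω, ∀ u₁ ∈ Icc 0 T, ∀ u₂ ∈ Icc 0 T, u₁ ≤ u₂ →
        (∀ r ∈ Icc u₁ u₂, shiftGen μ σ b φ r (X 0 x₀ r ω - b r) ≤ 0) →
        φ u₂ (X 0 x₀ u₂ ω - b u₂) - φ u₁ (X 0 x₀ u₁ ω - b u₁) ≤ N u₂ ω - N u₁ ω := by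
  obtain ⟨K, hK0, hK⟩ := exists_pderiv_bound h hs
  have h0 : (0:ℝ) ∈ Icc 0 T := ⟨le_rfl, hT.le⟩
  have hM := hXmp 0 h0 x₀ _ (c12On_shifted h hb) (hasCompactSupport_shifted hs hb.continuous)
  have hgen : ∀ r x, genOp μ σ (fun t x => φ t (x - b t)) r x = shiftGen μ σ b φ r (x - b r) := by
    intro r x
    obtain ⟨e1, e2, e3⟩ := shifted_pderivs h hb r x
    have f1 : pderivT (fun t x => φ t (x - b t)) r x = _ := e1.deriv
    have f2 : pderivX (fun t x => φ t (x - b t)) r x = _ := e2.deriv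
    have f3 : pderivXX (fun t x => φ t (x - b t)) r x = _ := e3.deriv
    simp only [genOp, shiftGen, f1, f2, f3, sub_add_cancel]
    ring
  have hc : ∀ ω, ContinuousOn (fun r => shiftGen μ σ b φ r (X 0 x₀ r ω - b r)) (Icc 0 T) := by
    intro ω
    have c1 := hXcont 0 x₀ ω
    have c2 : ContinuousOn (fun r => (r, X 0 x₀ r ω - b r)) (Icc 0 T) :=
      continuousOn_id.prodMk (c1.sub hb.continuous.continuousOn)
    have c3 : ContinuousOn (fun r => (r, X 0 x₀ r ω - b r + b r)) (Icc 0 T) :=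
      continuousOn_id.prodMk (by simpa using c1)
    have m3 : MapsTo (fun r => (r, X 0 x₀ r ω - b r + b r)) (Icc 0 T) (Icc 0 T ×ˢ univ) :=
      fun r hr => ⟨hr, mem_univ _⟩
    have d1 := (contDiff_pderivT h).continuous.comp_continuousOn c2
    have d2 := (contDiff_pderivX h).continuous.comp_continuousOn c2
    have d3 := (continuous_pderivXX h).comp_continuousOn c2
    have d4 := hμc.comp c3 m3
    have d5 := hσc.comp c3 m3
    exact (d1.add ((d4.sub (hb.continuous_deriv le_rfl).continuousOn).mul d2)).add
      ((continuousOn_const.mul (d5.pow 2)).mul d3)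
  have hi : ∀ ω, ∀ u₁ ∈ Icc 0 T, ∀ u₂ ∈ Icc 0 T, IntervalIntegrable
      (fun r => shiftGen μ σ b φ r (X 0 x₀ r ω - b r)) volume u₁ u₂ := by
    intro ω u₁ h₁ u₂ h₂
    exact ((hc ω).mono (uIcc_subset_Icc h₁ h₂)).intervalIntegrable
  have hincr : ∀ ω, ∀ u₁ ∈ Icc 0 T, ∀ u₂ ∈ Icc 0 T, u₁ ≤ u₂ → ∀ e : ℝ,
      (∀ r ∈ Icc u₁ u₂, shiftGen μ σ b φ r (X 0 x₀ r ω - b r) ≤ e) →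
      ∫ r in u₁..u₂, shiftGen μ σ b φ r (X 0 x₀ r ω - b r) ≤ e * (u₂ - u₁) := by
    intro ω u₁ h₁ u₂ h₂ h₁₂ e he
    refine (intervalIntegral.integral_mono_on h₁₂ (hi ω u₁ h₁ u₂ h₂)
      intervalIntegrable_const he).trans ?_
    simp [mul_comm]
  have hM0 : 0 ≤ M := (abs_nonneg _).trans (hμ 0 h0 0)
  have hG0 : 0 ≤ G := (abs_nonneg _).trans (hbG 0 h0)
  have hbound : ∀ t ∈ Icc (0:ℝ) T, ∀ y,
      shiftGen μ σ b φ t y ≤ K + (M + G) * K + 1 / 2 * Λ ^ 2 * K := by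
    intro t ht y
    obtain ⟨-, k1, k2, k3⟩ := hK t y
    have a1 := (le_abs_self _).trans k1
    have a2 : (μ t (y + b t) - deriv b t) * pderivX φ t y ≤ (M + G) * K := by
      refine (le_abs_self _).trans ?_
      rw [abs_mul]
      refine mul_le_mul ((abs_sub _ _).trans (add_le_add (hμ t ht _) (hbG t ht))) k2
        (abs_nonneg _) (by positivity)
    have a3 : (1 / 2) * σ t (y + b t) ^ 2 * pderivXX φ t y ≤ 1 / 2 * Λ ^ 2 * K := by
      refine (le_abs_self _).trans ?_
      rw [abs_mul, abs_of_nonneg (by positivity)]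
      have : σ t (y + b t) ^ 2 ≤ Λ ^ 2 := by
        rw [← sq_abs]; have := hσ t ht (y + b t); gcongr
      gcongr
    simp only [shiftGen]
    linarith
  refine ⟨_, hM, K + (M + G) * K + 1 / 2 * Λ ^ 2 * K, by positivity, fun t y => ?_, ?_, ?_⟩
  · have : 0 ≤ (M + G) * K + 1 / 2 * Λ ^ 2 * K := by positivity
    linarith [(hK t y).1]
  · intro ω u₁ h₁ u₂ h₂ h₁₂
    have h3 := hincr ω u₁ h₁ u₂ h₂ h₁₂ _
      fun r hr => hbound r ⟨h₁.1.trans hr.1, hr.2.trans h₂.2⟩ _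
    have h4 := intervalIntegral.integral_interval_sub_left (hi ω 0 h0 u₂ h₂) (hi ω 0 h0 u₁ h₁)
    simp only [hgen]
    linarith
  · intro ω u₁ h₁ u₂ h₂ h₁₂ hg
    have h3 := hincr ω u₁ h₁ u₂ h₂ h₁₂ 0 hg
    have h4 := intervalIntegral.integral_interval_sub_left (hi ω 0 h0 u₂ h₂) (hi ω 0 h0 u₁ h₁)
    simp only [hgen]
    linarith

/-! ### Comparison of the path with the two value functions -/

/-- A function that is `C²` for times before `T'` agrees near any bounded part of `[0,T] × ℝ` with
a compactly supported `C²` function. -/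
lemma exists_cutoff (φ : ℝ → ℝ → ℝ) (T T' R : ℝ) (hT : 0 < T) (hT' : T < T') (hR : 0 < R)
    (hφ : ∀ p : ℝ × ℝ, p.1 < T' → ContDiffAt ℝ 2 (fun p : ℝ × ℝ => φ p.1 p.2) p) :
    ∃ ψ : ℝ → ℝ → ℝ, ContDiff ℝ 2 (fun p : ℝ × ℝ => ψ p.1 p.2) ∧
      HasCompactSupport (fun p : ℝ × ℝ => ψ p.1 p.2) ∧
      ∀ t ∈ Icc 0 T, ∀ y, |y| < R →
        (fun p : ℝ × ℝ => ψ p.1 p.2) =ᶠ[𝓝 (t, y)] (fun p : ℝ × ℝ => φ p.1 p.2) := by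
  let χ₁ : ContDiffBump (T / 2) :=
    ⟨T / 2 + (T' - T) / 4, T / 2 + (T' - T) / 2, by linarith, by linarith⟩
  let χ₂ : ContDiffBump (0:ℝ) := ⟨R, R + 1, hR, by linarith⟩
  refine ⟨fun t y => χ₁ t * χ₂ y * φ t y, ?_, ?_, ?_⟩
  · rw [contDiff_iff_contDiffAt]
    intro p
    by_cases hp : p.1 < T'
    · have h1 : ContDiff ℝ 2 fun p : ℝ × ℝ => χ₁ p.1 := χ₁.contDiff.comp contDiff_fst
      have h2 : ContDiff ℝ 2 fun p : ℝ × ℝ => χ₂ p.2 := χ₂.contDiff.comp contDiff_snd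
      exact (h1.contDiffAt.mul h2.contDiffAt).mul (hφ p hp)
    · have hev : (fun p : ℝ × ℝ => χ₁ p.1 * χ₂ p.2 * φ p.1 p.2) =ᶠ[𝓝 p] fun _ => 0 := by
        have : ∀ᶠ p' : ℝ × ℝ in 𝓝 p, T + (T' - T) / 2 < p'.1 :=
          continuous_fst.continuousAt.eventually (lt_mem_nhds (by linarith))
        filter_upwards [this] with p' hp'
        rw [χ₁.zero_of_le_dist, zero_mul, zero_mul]
        rw [Real.dist_eq]
        refine le_trans ?_ (le_abs_self _)
        show T / 2 + (T' - T) / 2 ≤ _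
        linarith
      exact contDiffAt_const.congr_of_eventuallyEq hev
  · refine HasCompactSupport.intro
      ((isCompact_closedBall (T / 2) χ₁.rOut).prod (isCompact_closedBall (0:ℝ) χ₂.rOut)) ?_
    rintro ⟨t, y⟩ hp
    rw [mem_prod, not_and_or] at hp
    rcases hp with hp | hp
    · simp only [Metric.mem_closedBall, not_le] at hp
      simp [χ₁.zero_of_le_dist hp.le]
    · simp only [Metric.mem_closedBall, not_le] at hp
      simp [χ₂.zero_of_le_dist hp.le]
  · intro t ht y hy
    have h1 : ∀ᶠ p : ℝ × ℝ in 𝓝 (t, y), χ₁ p.1 = 1 := by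
      refine continuous_fst.continuousAt.eventually (χ₁.eventuallyEq_one_of_mem_ball ?_)
      rw [Metric.mem_ball, Real.dist_eq, abs_lt]
      show -(T / 2 + (T' - T) / 4) < _ ∧ _ < T / 2 + (T' - T) / 4
      constructor <;> linarith [ht.1, ht.2]
    have h2 : ∀ᶠ p : ℝ × ℝ in 𝓝 (t, y), χ₂ p.2 = 1 := by
      refine continuous_snd.continuousAt.eventually (χ₂.eventuallyEq_one_of_mem_ball ?_)
      rw [Metric.mem_ball, Real.dist_eq, sub_zero]
      exact hy
    filter_upwards [h1, h2] with p e1 e2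
    rw [e1, e2, one_mul, one_mul]

lemma shiftGen_congr {μ σ : ℝ → ℝ → ℝ} {b : ℝ → ℝ} {φ ψ : ℝ → ℝ → ℝ} {t y : ℝ}
    (h : (fun p : ℝ × ℝ => ψ p.1 p.2) =ᶠ[𝓝 (t, y)] (fun p : ℝ × ℝ => φ p.1 p.2)) :
    shiftGen μ σ b ψ t y = shiftGen μ σ b φ t y := by
  have h1 : (fun s => ψ s y) =ᶠ[𝓝 t] fun s => φ s y := by
    have : Tendsto (fun s : ℝ => (s, y)) (𝓝 t) (𝓝 (t, y)) :=
      (Continuous.prodMk_left y).tendsto t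
    exact this.eventually h
  have h2 : ψ t =ᶠ[𝓝 y] φ t := by
    have : Tendsto (fun s : ℝ => (t, s)) (𝓝 y) (𝓝 (t, y)) :=
      (Continuous.prodMk_right t).tendsto y
    exact this.eventually h
  simp only [shiftGen, pderivT, pderivX, pderivXX, h1.deriv_eq, h2.deriv_eq, h2.deriv.deriv_eq]

/-- Off an event of small probability, a process with continuous paths and deterministic starting
point is bounded by a constant. -/
lemma exists_path_bound [m : MeasurableSpace Ω] (P : Measure Ω) [IsProbabilityMeasure P]
    (Y : ℝ → Ω → ℝ) (T : ℝ) (hT : 0 < T) (hmeas : ∀ t, Measurable (Y t))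
    (hcont : ∀ ω, ContinuousOn (fun t => Y t ω) (Icc 0 T)) (y₀ : ℝ) (hy₀ : ∀ ω, Y 0 ω = y₀)
    (θ : ℝ) (hθ : 0 < θ) :
    ∃ R > 0, ∃ B : Set Ω, MeasurableSet B ∧ P.real B ≤ θ ∧
      ∀ ω, ω ∉ B → ∀ t ∈ Icc 0 T, |Y t ω| < R := by
  obtain ⟨d, hd, B, hBm, hB, h⟩ := exists_modulus P Y T hT hmeas hcont 1 θ one_pos hθ
  obtain ⟨n, hn⟩ := exists_nat_gt (T / d)
  have hn0 : (0:ℝ) < n := lt_trans (by positivity) hn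
  refine ⟨|y₀| + n + 1, by positivity, B, hBm, hB, fun ω hω t ht => ?_⟩
  have hmem : ∀ k : ℕ, k ≤ n → t * k / n ∈ Icc 0 T := by
    intro k hk
    have hk' : (k:ℝ) ≤ n := by exact_mod_cast hk
    refine ⟨by have := ht.1; positivity, ?_⟩
    rw [div_le_iff₀ hn0]
    exact mul_le_mul ht.2 hk' (by positivity) hT.le
  have hind : ∀ k : ℕ, k ≤ n → |Y (t * k / n) ω| ≤ |y₀| + k := by
    intro k
    induction k with
    | zero => intro _; simp [hy₀]
    | succ k ih =>
      intro hk
      have h1 := ih (by omega)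
      have h2 := h ω hω _ (hmem (k+1) hk) _ (hmem k (by omega)) (by
        have : t * ((k + 1 : ℕ) : ℝ) / n - t * k / n = t / n := by push_cast; ring
        rw [this, abs_of_nonneg (div_nonneg ht.1 hn0.le), div_lt_iff₀ hn0]
        rw [div_lt_iff₀ hd] at hn
        linarith [ht.2])
      have h3 := abs_sub_abs_le_abs_sub (Y (t * ((k + 1 : ℕ) : ℝ) / n) ω) (Y (t * k / n) ω)
      push_cast at h2 h3 ⊢
      linarith
  have := hind n le_rfl
  rw [mul_div_cancel_right₀ _ hn0.ne'] at this
  linarith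

open Classical in
/-- The probability that `X` comes within `η` of `b` but never exceeds `b + η` is controlled by
two supersolutions: `w` once the path has come close to `b`, and `q` before that. -/
lemma two_phase_bound [m : MeasurableSpace Ω] (P : Measure Ω) [IsProbabilityMeasure P]
    (F : Filtration ℝ m) (T x₀ M Λ G : ℝ) (hT : 0 < T)
    (μ σ : ℝ → ℝ → ℝ)
    (hμc : ContinuousOn (fun p : ℝ × ℝ => μ p.1 p.2) (Icc 0 T ×ˢ (univ : Set ℝ)))
    (hσc : ContinuousOn (fun p : ℝ × ℝ => σ p.1 p.2) (Icc 0 T ×ˢ (univ : Set ℝ)))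
    (hμ : ∀ t ∈ Icc (0:ℝ) T, ∀ x, |μ t x| ≤ M) (hσ : ∀ t ∈ Icc (0:ℝ) T, ∀ x, |σ t x| ≤ Λ)
    (X : ℝ → ℝ → ℝ → Ω → ℝ)
    (hXad : ∀ s x : ℝ, Adapted F (X s x))
    (hXcont : ∀ s x : ℝ, ∀ ω, ContinuousOn (fun u => X s x u ω) (Icc s T))
    (hXinit : ∀ s x : ℝ, ∀ ω, X s x s ω = x)
    (hXmp : SolvesMP T μ σ P F X) (b : ℝ → ℝ) (hb : ContDiff ℝ 1 b)
    (hbG : ∀ t ∈ Icc (0:ℝ) T, |deriv b t| ≤ G) (η : ℝ) (hη : 0 < η) (T' : ℝ) (hT' : T < T')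
    (q w : ℝ → ℝ → ℝ)
    (hq : ∀ p : ℝ × ℝ, p.1 < T' → ContDiffAt ℝ 2 (fun p : ℝ × ℝ => q p.1 p.2) p)
    (hw : ∀ p : ℝ × ℝ, p.1 < T' → ContDiffAt ℝ 2 (fun p : ℝ × ℝ => w p.1 p.2) p)
    (hqg : ∀ t ∈ Icc (0:ℝ) T, ∀ y ≤ 2 * η, shiftGen μ σ b q t y ≤ 0)
    (hwg : ∀ t ∈ Icc (0:ℝ) T, ∀ y ≤ 2 * η, shiftGen μ σ b w t y ≤ 0)
    (hq0 : ∀ t ∈ Icc (0:ℝ) T, ∀ y ≤ 2 * η, 0 ≤ q t y)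
    (hw0 : ∀ t ∈ Icc (0:ℝ) T, ∀ y ≤ 2 * η, 0 ≤ w t y)
    (htr : ∀ t ∈ Icc (0:ℝ) T, ∀ y, -(2 * η) ≤ y → y ≤ η → w t y ≤ q t y)
    (V : ℝ) (hV : ∀ y ≤ η, q 0 y ≤ V) (β : ℝ) (hβ : 0 < β) (hwT : ∀ y ≤ η, β ≤ w T y) :
    β * P.real {ω | (∀ t ∈ Icc (0:ℝ) T, X 0 x₀ t ω < b t + η) ∧
      ∃ t ∈ Icc (0:ℝ) T, b t - η ≤ X 0 x₀ t ω} ≤ V := by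
  have h0 : (0:ℝ) ∈ Icc 0 T := ⟨le_rfl, hT.le⟩
  have hTT : T ∈ Icc 0 T := ⟨hT.le, le_rfl⟩
  have hV0 : 0 ≤ V := (hq0 0 h0 η (by linarith)).trans (hV η le_rfl)
  set Y : ℝ → Ω → ℝ := fun t ω => X 0 x₀ t ω - b t with hY
  have hYF : ∀ s t, s ≤ t → Measurable[F t] (Y s) := fun s t hst =>
    ((hXad 0 x₀ s).mono (F.mono hst) le_rfl).sub_const _
  have hYm : ∀ t, Measurable (Y t) := fun t => (hYF t t le_rfl).mono (F.le t) le_rfl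
  have hYc : ∀ ω, ContinuousOn (fun t => Y t ω) (Icc 0 T) := fun ω =>
    (hXcont 0 x₀ ω).sub hb.continuous.continuousOn
  set A := {ω | (∀ t ∈ Icc (0:ℝ) T, X 0 x₀ t ω < b t + η) ∧
      ∃ t ∈ Icc (0:ℝ) T, b t - η ≤ X 0 x₀ t ω} with hA
  refine le_of_forall_pos_le_add fun θ hθ => ?_
  -- off `B₁` the path is bounded by `R`, so that `q` and `w` may be cut off
  obtain ⟨R, hR, B₁, hB₁m, hB₁, hbd⟩ := exists_path_bound P Y T hT hYm hYc (x₀ - b 0)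
    (fun ω => by simp [hY, hXinit]) (θ / (3 * β)) (by positivity)
  obtain ⟨ψq, hψq, hψqs, hψqe⟩ := exists_cutoff q T T' (R + 2 * η) hT hT' (by positivity) hq
  obtain ⟨ψw, hψw, hψws, hψwe⟩ := exists_cutoff w T T' (R + 2 * η) hT hT' (by positivity) hw
  obtain ⟨Nq, hNq, Kq, hKq0, hKq, hNqK, hNq0⟩ := exists_martingale P F T x₀ M Λ G hT μ σ hμc hσc
    hμ hσ X hXcont hXmp b hb hbG ψq hψq hψqs
  obtain ⟨Nw, hNw, Kw, hKw0, hKw, hNwK, hNw0⟩ := exists_martingale P F T x₀ M Λ G hT μ σ hμc hσc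
    hμ hσ X hXcont hXmp b hb hbG ψw hψw hψws
  set K := Kq + Kw with hK
  have hK0 : 0 ≤ K := by positivity
  have hrange : ∀ y, -(R + η) < y → y < 2 * η → |y| < R + 2 * η := by
    intro y h1 h2; rw [abs_lt]; constructor <;> linarith
  -- off `B₂` the path moves by at most `η` between successive points of a fine grid
  obtain ⟨d, hd, B₂, hB₂m, hB₂, hmod⟩ := exists_modulus P Y T hT hYm hYc η
    (θ / (3 * (K * T + K + β))) hη (by positivity)
  obtain ⟨n, hn⟩ := exists_nat_gt (T / d)
  have hn0 : (0:ℝ) < n := lt_trans (by positivity) hn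
  have hnd : T / n < d := by
    rw [div_lt_iff₀ hd] at hn; rw [div_lt_iff₀ hn0]; linarith
  set t : ℕ → ℝ := fun k => k * T / n with ht
  have htmono : ∀ j k, j ≤ k → t j ≤ t k := by
    intro j k hjk
    have : (j:ℝ) ≤ k := by exact_mod_cast hjk
    simp only [ht]; gcongr
  have ht0 : t 0 = 0 := by simp [ht]
  have htn : t n = T := by simp only [ht]; field_simp
  have htmem : ∀ k ≤ n, t k ∈ Icc 0 T := fun k hk =>
    ⟨ht0 ▸ htmono 0 k (Nat.zero_le _), htn ▸ htmono k n hk⟩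
  have htstep : ∀ k, t (k+1) - t k = T / n := by
    intro k; simp only [ht]; push_cast; ring
  set S : Ω → ℕ → Prop := fun ω k => ∃ j ≤ k, -(2 * η) ≤ Y (t j) ω with hS
  set D : Ω → ℕ → Prop := fun ω k => ∃ j ≤ k, η ≤ Y (t j) ω ∨ Y (t j) ω ≤ -R with hD
  have hSmono : ∀ ω k, S ω k → S ω (k+1) := fun ω k ⟨j, hj, h⟩ => ⟨j, by omega, h⟩
  have hDmono : ∀ ω k, D ω k → D ω (k+1) := fun ω k ⟨j, hj, h⟩ => ⟨j, by omega, h⟩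
  have hDn : ∀ ω k, ¬ D ω k → Y (t k) ω < η ∧ -R < Y (t k) ω := by
    intro ω k h
    simp only [hD, not_exists, not_and, not_or, not_le] at h
    exact h k le_rfl
  have hSmeas : ∀ k, MeasurableSet[F (t k)] {ω | S ω k} := by
    intro k
    have : {ω | S ω k} = ⋃ j ∈ Iic k, {ω | -(2 * η) ≤ Y (t j) ω} := by ext; simp [hS]
    rw [this]
    exact MeasurableSet.biUnion (to_countable _) fun j hj =>
      measurableSet_le measurable_const (hYF _ _ (htmono j k hj))
  have hDmeas : ∀ k, MeasurableSet[F (t k)] {ω | D ω k} := by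
    intro k
    have : {ω | D ω k} = ⋃ j ∈ Iic k, ({ω | η ≤ Y (t j) ω} ∪ {ω | Y (t j) ω ≤ -R}) := by
      ext; simp [hD]
    rw [this]
    exact MeasurableSet.biUnion (to_countable _) fun j hj =>
      (measurableSet_le measurable_const (hYF _ _ (htmono j k hj))).union
        (measurableSet_le (hYF _ _ (htmono j k hj)) measurable_const)
  set Z : Ω → ℝ := fun ω => ∑ k ∈ Finset.range n,
    ((if ¬ S ω k ∧ ¬ D ω k then Nq (t (k+1)) ω - Nq (t k) ω else 0)
      + (if S ω k ∧ ¬ D ω k then Nw (t (k+1)) ω - Nw (t k) ω else 0)) with hZ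
  have hZ1 : ∀ k < n,
      (Integrable (fun ω => if ¬ S ω k ∧ ¬ D ω k then Nq (t (k+1)) ω - Nq (t k) ω else 0) P ∧
        ∫ ω, (if ¬ S ω k ∧ ¬ D ω k then Nq (t (k+1)) ω - Nq (t k) ω else 0) ∂P = 0) ∧
      (Integrable (fun ω => if S ω k ∧ ¬ D ω k then Nw (t (k+1)) ω - Nw (t k) ω else 0) P ∧
        ∫ ω, (if S ω k ∧ ¬ D ω k then Nw (t (k+1)) ω - Nw (t k) ω else 0) ∂P = 0) := by
    intro k hk
    constructor
    · have := hNq.integral_indicator_incr (htmem k hk.le) (htmem (k+1) hk)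
        (htmono k (k+1) (Nat.le_succ k)) ((hSmeas k).compl.inter (hDmeas k).compl)
      convert this using 4 with ω <;> simp [indicator_apply]
    · have := hNw.integral_indicator_incr (htmem k hk.le) (htmem (k+1) hk)
        (htmono k (k+1) (Nat.le_succ k)) ((hSmeas k).inter (hDmeas k).compl)
      convert this using 4 with ω <;> simp [indicator_apply]
  have hZi : Integrable Z P := integrable_finsetSum _ fun k hk =>
    (hZ1 k (Finset.mem_range.1 hk)).1.1.add (hZ1 k (Finset.mem_range.1 hk)).2.1
  have hZ0 : ∫ ω, Z ω ∂P = 0 := by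
    refine (integral_finsetSum _ fun k hk =>
      (hZ1 k (Finset.mem_range.1 hk)).1.1.add (hZ1 k (Finset.mem_range.1 hk)).2.1).trans ?_
    refine Finset.sum_eq_zero fun k hk => ?_
    obtain ⟨⟨i1, e1⟩, i2, e2⟩ := hZ1 k (Finset.mem_range.1 hk)
    rw [integral_add' i1 i2, e1, e2, add_zero]
  have hqe : ∀ r ∈ Icc 0 T, ∀ y, -(R + η) < y → y < 2 * η → ψq r y = q r y :=
    fun r hr y h1 h2 => (hψqe r hr y (hrange y h1 h2)).eq_of_nhds
  have hwe : ∀ r ∈ Icc 0 T, ∀ y, -(R + η) < y → y < 2 * η → ψw r y = w r y :=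
    fun r hr y h1 h2 => (hψwe r hr y (hrange y h1 h2)).eq_of_nhds
  have hcmp : ∀ ω, ∀ c e : ℝ, 0 ≤ c → 0 ≤ e →
      (∀ k < n, ¬ D ω k → -c ≤ ψq (t (k+1)) (Y (t (k+1)) ω)) →
      (∀ k < n, ¬ D ω k → -c ≤ ψw (t (k+1)) (Y (t (k+1)) ω)) →
      (∀ k < n, ¬ D ω k → ψq (t (k+1)) (Y (t (k+1)) ω) - ψq (t k) (Y (t k) ω) - e ≤
        Nq (t (k+1)) ω - Nq (t k) ω) →
      (∀ k < n, ¬ D ω k → ψw (t (k+1)) (Y (t (k+1)) ω) - ψw (t k) (Y (t k) ω) - e ≤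
        Nw (t (k+1)) ω - Nw (t k) ω) →
      (if D ω n then -c else if S ω n then ψw T (Y T ω) else ψq T (Y T ω)) ≤
        V + n * e + Z ω := by
    intro ω c e hc he h1 h2 h3 h4
    have hq0' : ¬ D ω 0 → ψq (t 0) (Y (t 0) ω) ≤ V := by
      intro h
      obtain ⟨g1, g2⟩ := hDn ω 0 h
      rw [hqe _ (htmem 0 (Nat.zero_le _)) _ (by linarith) (by linarith), ht0]
      exact hV _ (ht0 ▸ g1.le)
    have htr' : ∀ k ≤ n, ¬ D ω k → -(2 * η) ≤ Y (t k) ω →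
        ψw (t k) (Y (t k) ω) ≤ ψq (t k) (Y (t k) ω) := by
      intro k hk h h'
      obtain ⟨g1, g2⟩ := hDn ω k h
      rw [hqe _ (htmem k hk) _ (by linarith) (by linarith),
        hwe _ (htmem k hk) _ (by linarith) (by linarith)]
      exact htr _ (htmem k hk) _ h' g1.le
    have := two_phase_comparison (S ω) (D ω) (hSmono ω) (hDmono ω)
      (fun k => ψq (t k) (Y (t k) ω)) (fun k => ψw (t k) (Y (t k) ω))
      (fun k => Nq (t (k+1)) ω - Nq (t k) ω) (fun k => Nw (t (k+1)) ω - Nw (t k) ω)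
      c e V hc he hV0 n (fun _ => hq0') ?_ h1 h2 h3 h4 ?_ n le_rfl
    · simp only [htn] at this
      convert this
    · rintro ⟨j, hj, h⟩ h'
      obtain rfl : j = 0 := by omega
      exact (htr' 0 (Nat.zero_le _) h' h).trans (hq0' h')
    · rintro k hk hSk ⟨j, hj, h⟩ hDk
      -- `S` holds at time `k+1` but not at time `k`, so it is due to the position at `k+1`
      have hj' : j = k + 1 := by
        by_contra hne
        exact hSk ⟨j, by omega, h⟩
      subst hj'
      exact htr' _ hk hDk h
  have hseg : ∀ ω, ω ∉ B₂ → ∀ k < n, ¬ D ω k → ∀ r ∈ Icc (t k) (t (k+1)),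
      r ∈ Icc 0 T ∧ -(R + η) < Y r ω ∧ Y r ω < 2 * η := by
    intro ω hω k hk h r hr
    have hr' : r ∈ Icc 0 T :=
      ⟨(htmem k hk.le).1.trans hr.1, hr.2.trans (htmem (k+1) hk).2⟩
    obtain ⟨g1, g2⟩ := hDn ω k h
    have := hmod ω hω r hr' (t k) (htmem k hk.le) (by
      rw [abs_of_nonneg (by linarith [hr.1])]
      linarith [hr.2, htstep k])
    rw [abs_le] at this
    exact ⟨hr', by linarith, by linarith⟩
  have hgood : ∀ ω, ω ∉ B₂ →
      (if D ω n then 0 else if S ω n then ψw T (Y T ω) else ψq T (Y T ω)) ≤ V + Z ω := by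
    intro ω hω
    have hst : ∀ k, t k ≤ t (k+1) := fun k => htmono k (k+1) (Nat.le_succ k)
    have := hcmp ω 0 0 le_rfl le_rfl ?_ ?_ ?_ ?_
    · simpa using this
    · intro k hk h
      obtain ⟨g1, g2, g3⟩ := hseg ω hω k hk h _ ⟨hst k, le_rfl⟩
      rw [hqe _ g1 _ g2 g3, neg_zero]; exact hq0 _ g1 _ g3.le
    · intro k hk h
      obtain ⟨g1, g2, g3⟩ := hseg ω hω k hk h _ ⟨hst k, le_rfl⟩
      rw [hwe _ g1 _ g2 g3, neg_zero]; exact hw0 _ g1 _ g3.le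
    · intro k hk h
      rw [sub_zero]
      refine hNq0 ω _ (htmem k hk.le) _ (htmem (k+1) hk) (hst k) fun r hr => ?_
      obtain ⟨g1, g2, g3⟩ := hseg ω hω k hk h r hr
      rw [shiftGen_congr (hψqe r g1 _ (hrange _ g2 g3))]
      exact hqg r g1 _ g3.le
    · intro k hk h
      rw [sub_zero]
      refine hNw0 ω _ (htmem k hk.le) _ (htmem (k+1) hk) (hst k) fun r hr => ?_
      obtain ⟨g1, g2, g3⟩ := hseg ω hω k hk h r hr
      rw [shiftGen_congr (hψwe r g1 _ (hrange _ g2 g3))]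
      exact hwg r g1 _ g3.le
  have hbad : ∀ ω, -K ≤ V + K * T + Z ω := by
    intro ω
    have hst : ∀ k, t k ≤ t (k+1) := fun k => htmono k (k+1) (Nat.le_succ k)
    have hq' : ∀ s y, -K ≤ ψq s y := fun s y => by linarith [neg_abs_le (ψq s y), hKq s y]
    have hw' : ∀ s y, -K ≤ ψw s y := fun s y => by linarith [neg_abs_le (ψw s y), hKw s y]
    have hstep0 : 0 ≤ T / n := by positivity
    have := hcmp ω K (K * (T / n)) hK0 (by positivity) (fun k _ _ => hq' _ _)
      (fun k _ _ => hw' _ _) ?_ ?_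
    · have e1 : (n:ℝ) * (K * (T / n)) = K * T := by field_simp
      rw [e1] at this
      refine le_trans ?_ this
      split_ifs
      · exact le_rfl
      · exact hw' _ _
      · exact hq' _ _
    · intro k hk h
      refine le_trans ?_ (hNqK ω _ (htmem k hk.le) _ (htmem (k+1) hk) (hst k))
      rw [htstep]
      have : Kq * (T / n) ≤ K * (T / n) := mul_le_mul_of_nonneg_right (by linarith) hstep0
      linarith
    · intro k hk h
      refine le_trans ?_ (hNwK ω _ (htmem k hk.le) _ (htmem (k+1) hk) (hst k))
      rw [htstep]
      have : Kw * (T / n) ≤ K * (T / n) := mul_le_mul_of_nonneg_right (by linarith) hstep0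
      linarith
  -- a nonnegative variable of mean close to `V` which is at least `β` on `A`, up to `B₁`, `B₂`
  set W : Ω → ℝ := fun ω => V + B₂.indicator (fun _ => K * T + K) ω + Z ω with hW
  have hIi : Integrable (B₂.indicator fun _ => K * T + K) P :=
    (integrable_const _).indicator hB₂m
  have hWi : Integrable W P := ((integrable_const V).add hIi).add hZi
  have hWE : ∫ ω, W ω ∂P = V + P.real B₂ * (K * T + K) := by
    have e1 : ∫ ω, W ω ∂P =
        ∫ ω, (V + B₂.indicator (fun _ => K * T + K) ω) ∂P + ∫ ω, Z ω ∂P :=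
      integral_add ((integrable_const V).add hIi) hZi
    rw [e1, integral_add (integrable_const V) hIi, hZ0, integral_indicator_const _ hB₂m]
    simp
  have hW0 : ∀ ω, 0 ≤ W ω := by
    intro ω
    by_cases hω : ω ∈ B₂
    · simp only [hW, indicator_of_mem hω]
      linarith [hbad ω]
    · simp only [hW, indicator_of_notMem hω, add_zero]
      refine le_trans ?_ (hgood ω hω)
      split_ifs with h1 h2
      · exact le_rfl
      · obtain ⟨g1, g2⟩ := hDn ω n h1
        rw [htn] at g1 g2
        rw [hwe T hTT _ (by linarith) (by linarith)]
        exact hw0 T hTT _ (by linarith)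
      · obtain ⟨g1, g2⟩ := hDn ω n h1
        rw [htn] at g1 g2
        rw [hqe T hTT _ (by linarith) (by linarith)]
        exact hq0 T hTT _ (by linarith)
  have hsub : A ⊆ {ω | β ≤ W ω} ∪ (B₁ ∪ B₂) := by
    rintro ω ⟨hA1, s, hs, hA2⟩
    by_cases h1 : ω ∈ B₁
    · exact Or.inr (Or.inl h1)
    by_cases h2 : ω ∈ B₂
    · exact Or.inr (Or.inr h2)
    left
    have hlt : ∀ k ≤ n, Y (t k) ω < η := fun k hk => by
      have := hA1 _ (htmem k hk)
      simp only [hY]; linarith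
    have hDn' : ¬ D ω n := by
      rintro ⟨j, hj, h | h⟩
      · exact absurd (hlt j hj) (not_lt.2 h)
      · have := hbd ω h1 _ (htmem j hj)
        rw [abs_lt] at this
        linarith [this.1]
    have hSn : S ω n := by
      -- the last grid point before the time `s` at which the path is close to the boundary
      have hx : 0 ≤ s * n / T := by have := hs.1; positivity
      have hk1 := Nat.floor_le hx
      have hk2 := Nat.lt_floor_add_one (s * n / T)
      have hkn : ⌊s * n / T⌋₊ ≤ n := by
        have : s * n / T ≤ n := by
          rw [div_le_iff₀ hT, mul_comm]; exact mul_le_mul_of_nonneg_left hs.2 hn0.le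
        exact_mod_cast hk1.trans this
      set k := ⌊s * n / T⌋₊
      have e1 : t k ≤ s := by
        simp only [ht]
        rw [le_div_iff₀ hT] at hk1
        rwa [div_le_iff₀ hn0]
      have e2 : s - t k < d := by
        have : s < t (k+1) := by
          simp only [ht]
          rw [div_lt_iff₀ hT] at hk2
          rw [lt_div_iff₀ hn0]; push_cast; exact hk2
        linarith [htstep k]
      have := hmod ω h2 s hs (t k) (htmem k hkn) (by rwa [abs_of_nonneg (by linarith)])
      rw [abs_le] at this
      refine ⟨k, hkn, ?_⟩
      have h3 : -η ≤ Y s ω := by simp only [hY]; linarith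
      linarith
    have h3 := hgood ω h2
    simp only [hDn', hSn, if_true, if_false] at h3
    obtain ⟨g1, g2⟩ := hDn ω n hDn'
    rw [htn] at g1 g2
    rw [hwe T hTT _ (by linarith) (by linarith)] at h3
    show β ≤ W ω
    simp only [hW, indicator_of_notMem h2, add_zero]
    exact (hwT _ g1.le).trans h3
  have hMarkov := mul_meas_ge_le_integral_of_nonneg (μ := P) (ae_of_all _ hW0) hWi β
  rw [hWE] at hMarkov
  have hPA : P.real A ≤ P.real {ω | β ≤ W ω} + (P.real B₁ + P.real B₂) :=
    (measureReal_mono hsub).trans ((measureReal_union_le _ _).trans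
      (add_le_add_right (measureReal_union_le _ _) _))
  have hB₁' : β * P.real B₁ ≤ θ / 3 := by
    have := mul_le_mul_of_nonneg_left hB₁ hβ.le
    have e : β * (θ / (3 * β)) = θ / 3 := by field_simp
    linarith
  have hB₂' : (K * T + K + β) * P.real B₂ ≤ θ / 3 := by
    have := mul_le_mul_of_nonneg_left hB₂ (by positivity : 0 ≤ K * T + K + β)
    have e : (K * T + K + β) * (θ / (3 * (K * T + K + β))) = θ / 3 := by field_simp
    linarith
  have := mul_le_mul_of_nonneg_left hPA hβ.le
  nlinarith

/-! ### The linear bound for the boundary layer -/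

/-- `σ²` is Lipschitz around the points `(T, z)` with `|z| ≤ G`, uniformly in `z`: close to `z`
by local Lipschitz continuity in space, far from `z` by boundedness, and in time because
`∂ₜσ`, being Hölder continuous, is bounded on bounded sets. -/
lemma exists_sq_lipschitz (T α Λ G : ℝ) (hT : 0 < T) (hα : 0 < α) (hΛ : 0 < Λ) (hG : 0 ≤ G)
    (μ σ : ℝ → ℝ → ℝ) (hC1 : CondC1 T μ σ) (hC3 : CondC3 T α μ σ)
    (hσ : ∀ t ∈ Icc (0:ℝ) T, ∀ x, |σ t x| ≤ Λ) :
    ∃ H ≥ 0, ∀ t ∈ Icc (0:ℝ) T, ∀ x z : ℝ, |z| ≤ G →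
      |σ t x ^ 2 - σ T z ^ 2| ≤ H * (|x - z| + (T - t)) := by
  have hTT : T ∈ Icc 0 T := ⟨hT.le, le_rfl⟩
  have h0T : (0:ℝ) ∈ Icc 0 T := ⟨le_rfl, hT.le⟩
  obtain ⟨Ka, hKa⟩ := hC1.2.2.2.2 (G + 2) (by linarith)
  obtain ⟨-, hdiff, -, -, -, ⟨C, hC⟩, -⟩ := hC3
  set L := |pderivT σ 0 0| + |C| * (G ^ α + T ^ (α / 2)) with hL
  have hL0 : 0 ≤ L := by positivity
  refine ⟨|Ka| + Λ ^ 2 + 2 * Λ * L, by positivity, fun t ht x z hz => ?_⟩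
  have hsq : ∀ t ∈ Icc (0:ℝ) T, ∀ x, σ t x ^ 2 ≤ Λ ^ 2 := fun t ht x =>
    sq_le_sq.2 ((hσ t ht x).trans (le_abs_self _))
  have hx : |σ t x ^ 2 - σ t z ^ 2| ≤ (|Ka| + Λ ^ 2) * |x - z| := by
    rcases lt_or_ge |x - z| 1 with h | h
    · have hz' := abs_le.1 hz
      have h' := abs_lt.1 h
      have := hKa t ht x ⟨by linarith, by linarith⟩ z ⟨by linarith, by linarith⟩
      have h1 : Ka * |x - z| ≤ |Ka| * |x - z| :=
        mul_le_mul_of_nonneg_right (le_abs_self _) (abs_nonneg _)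
      have h2 : 0 ≤ Λ ^ 2 * |x - z| := by positivity
      linarith [abs_nonneg (μ t x - μ t z)]
    · have h1 : |σ t x ^ 2 - σ t z ^ 2| ≤ Λ ^ 2 := by
        rw [abs_le]
        constructor <;> nlinarith [hsq t ht x, hsq t ht z, sq_nonneg (σ t x), sq_nonneg (σ t z)]
      refine h1.trans ?_
      have h2 : 0 ≤ |Ka| := abs_nonneg _
      nlinarith [sq_nonneg Λ]
  have ht' : |σ t z - σ T z| ≤ L * (T - t) := by
    have := (convex_Icc (0:ℝ) T).norm_image_sub_le_of_norm_deriv_le (f := fun s => σ s z) (C := L)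
      (fun s hs => (hdiff s hs z).2.2.1) (fun s hs => ?_) hTT ht
    · simpa only [Real.norm_eq_abs, abs_sub_comm t T, abs_of_nonneg (sub_nonneg.2 ht.2)] using this
    · have h1 := hC s hs 0 h0T z 0
      simp only [sub_zero] at h1
      have h2 : |z| ^ α ≤ G ^ α := Real.rpow_le_rpow (abs_nonneg _) hz hα.le
      have h3 : |s| ^ (α / 2) ≤ T ^ (α / 2) :=
        Real.rpow_le_rpow (abs_nonneg _) (by rw [abs_of_nonneg hs.1]; exact hs.2) (by positivity)
      have h4 : C * (|z| ^ α + |s| ^ (α / 2)) ≤ |C| * (G ^ α + T ^ (α / 2)) :=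
        mul_le_mul (le_abs_self _) (by linarith) (by positivity) (abs_nonneg _)
      have h5 : |pderivT σ s z| ≤ L := by
        have := abs_sub_abs_le_abs_sub (pderivT σ s z) (pderivT σ 0 0)
        linarith
      exact h5
  have h2 : |σ t z ^ 2 - σ T z ^ 2| ≤ 2 * Λ * L * (T - t) := by
    rw [show σ t z ^ 2 - σ T z ^ 2 = (σ t z + σ T z) * (σ t z - σ T z) by ring, abs_mul,
      mul_assoc (2 * Λ)]
    refine mul_le_mul ((abs_add_le _ _).trans ?_) ht' (abs_nonneg _) (by positivity)
    linarith [hσ t ht z, hσ T hTT z]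
  have h3 : |σ t x ^ 2 - σ T z ^ 2| ≤ |σ t x ^ 2 - σ t z ^ 2| + |σ t z ^ 2 - σ T z ^ 2| :=
    abs_sub_le _ _ _
  have h4 : 0 ≤ 2 * Λ * L * |x - z| := by positivity
  have h5 : 0 ≤ (|Ka| + Λ ^ 2) * (T - t) := mul_nonneg (by positivity) (by linarith [ht.2])
  nlinarith

lemma shiftGen_const_mul (μ σ : ℝ → ℝ → ℝ) (b : ℝ → ℝ) (a : ℝ) (φ : ℝ → ℝ → ℝ) (t y : ℝ) :
    shiftGen μ σ b (fun t y => a * φ t y) t y = a * shiftGen μ σ b φ t y := by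
  have h : deriv (fun y => a * φ t y) = fun y => a * deriv (φ t) y := by
    ext y; exact deriv_const_mul_field _
  have e1 : pderivT (fun t y => a * φ t y) t y = a * pderivT φ t y := deriv_const_mul_field _
  have e2 : pderivX (fun t y => a * φ t y) t y = a * pderivX φ t y := deriv_const_mul_field _
  have e3 : pderivXX (fun t y => a * φ t y) t y = a * pderivXX φ t y := by
    simp only [pderivXX]
    rw [h]; exact deriv_const_mul_field _
  simp only [shiftGen, e1, e2, e3]
  ring

set_option maxHeartbeats 800000 in
/-- The probability that the path comes within `η` of `b` but stays below `b + η` is `O(η)`,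
uniformly over boundaries `b` with bounded derivative and bounded terminal value. The Gaussian
width in `farFn` is fitted to `σ(T, b(T))`, and `T' = T + η²`, so that `√(T' - t) ≥ η`. -/
lemma exists_layer_bound [m : MeasurableSpace Ω] (P : Measure Ω) [IsProbabilityMeasure P]
    (F : Filtration ℝ m) (T x₀ α G : ℝ) (hT : 0 < T) (hα : 0 < α) (hG : 0 ≤ G)
    (μ σ : ℝ → ℝ → ℝ) (hC1 : CondC1 T μ σ) (hC2 : CondC2 T σ) (hC3 : CondC3 T α μ σ)
    (X : ℝ → ℝ → ℝ → Ω → ℝ)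
    (hXad : ∀ s x : ℝ, Adapted F (X s x))
    (hXcont : ∀ s x : ℝ, ∀ ω, ContinuousOn (fun u => X s x u ω) (Icc s T))
    (hXinit : ∀ s x : ℝ, ∀ ω, X s x s ω = x)
    (hXmp : SolvesMP T μ σ P F X) :
    ∃ C > 0, ∀ b : ℝ → ℝ, ContDiff ℝ 1 b → (∀ t ∈ Icc (0:ℝ) T, |deriv b t| ≤ G) → |b T| ≤ G →
      ∀ η, 0 < η → η ≤ 1 →
        P.real {ω | (∀ t ∈ Icc (0:ℝ) T, X 0 x₀ t ω < b t + η) ∧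
          ∃ t ∈ Icc (0:ℝ) T, b t - η ≤ X 0 x₀ t ω} ≤ C * η := by
  have hTT : T ∈ Icc 0 T := ⟨hT.le, le_rfl⟩
  have h0T : (0:ℝ) ∈ Icc 0 T := ⟨le_rfl, hT.le⟩
  obtain ⟨M₀, hM₀⟩ := hC3.1
  obtain ⟨σ₀, hσ₀, hσσ⟩ := hC2
  set Λ := M₀ with hΛdef
  have hΛσ : σ₀ ≤ Λ := (hσσ 0 h0T 0).trans ((le_abs_self _).trans (hM₀ 0 h0T 0).2)
  have hΛ : 0 < Λ := hσ₀.trans_le hΛσ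
  have hμ : ∀ t ∈ Icc (0:ℝ) T, ∀ x, |μ t x| ≤ Λ := fun t ht x => (hM₀ t ht x).1
  have hσ : ∀ t ∈ Icc (0:ℝ) T, ∀ x, |σ t x| ≤ Λ := fun t ht x => (hM₀ t ht x).2
  obtain ⟨H₀, hH₀, hH⟩ := exists_sq_lipschitz T α Λ G hT hα hΛ hG μ σ hC1 hC3 hσ
  set m' := Λ + G with hm'
  have hm'0 : 0 ≤ m' := by positivity
  set r₁ := √(T + 1) with hr₁
  have hr₁0 : 0 < r₁ := Real.sqrt_pos.2 (by linarith)
  set kb := 1 / (2 * σ₀ ^ 2) with hkb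
  have hkb0 : 0 < kb := by positivity
  set c := 1 / (4 * Λ ^ 2) with hc
  have hc0 : 0 < c := by positivity
  set H := H₀ * (2 + (G + 1) * r₁) with hHdef
  obtain ⟨N, hN, B, hB, hNB⟩ := exists_farFn_constants H m' r₁ kb c (by positivity) hm'0 hr₁0.le
    hkb0.le hc0
  set κ := 4 * Real.exp (16 * kb) with hκ
  have hκ0 : 0 < κ := by positivity
  set β := scaleFn (2 * m' * r₁) (σ₀ ^ 2) 1 with hβ
  have hβ0 : 0 < β := by
    rw [hβ, ← scaleFn_zero (2 * m' * r₁) (σ₀ ^ 2)]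
    exact scaleFn_mono _ _ one_pos
  set C₀ := Real.exp (B * r₁) * (1 / √T + N) with hC₀
  have hsT : 0 < √T := Real.sqrt_pos.2 hT
  have hC₀0 : 0 < C₀ := by positivity
  refine ⟨κ * C₀ / β, by positivity, fun b hb hbG hbT η hη hη1 => ?_⟩
  set s := σ T (b T) with hs
  have hs0 : σ₀ ≤ s := hσσ T hTT _
  have hs1 : s ≤ Λ := (le_abs_self _).trans (hσ T hTT _)
  have hspos : 0 < s := hσ₀.trans_le hs0
  set k := 1 / (2 * s ^ 2) with hk
  have hk0 : 0 < k := by positivity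
  have hkmem : k ∈ Icc (2 * c) kb := by
    constructor
    · rw [hc, hk, show 2 * (1 / (4 * Λ ^ 2)) = 1 / (2 * Λ ^ 2) by field_simp; norm_num]
      gcongr
    · rw [hk, hkb]; gcongr
  set T' := T + η ^ 2 with hT'def
  have hη2 : 0 < η ^ 2 := by positivity
  have hη21 : η ^ 2 ≤ 1 := pow_le_one₀ hη.le hη1
  have hT' : T < T' := by linarith
  -- elementary facts on the scale `r = √(T' - t)`
  have hr : ∀ t ∈ Icc (0:ℝ) T, η ≤ √(T' - t) ∧ √(T' - t) ≤ r₁ := fun t ht =>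
    ⟨Real.le_sqrt_of_sq_le (by linarith [ht.2]), Real.sqrt_le_sqrt (by linarith [ht.1])⟩
  have hdrift : ∀ t ∈ Icc (0:ℝ) T, ∀ x, |μ t x - deriv b t| ≤ m' := fun t ht x =>
    (abs_sub _ _).trans (add_le_add (hμ t ht x) (hbG t ht))
  have hHt : ∀ t ∈ Icc (0:ℝ) T, ∀ y ≤ 2 * η,
      |σ t (y + b t) ^ 2 - s ^ 2| ≤ H * (√(T' - t) + (2 * η - y)) := by
    intro t ht y hy
    refine (hH t ht (y + b t) (b T) hbT).trans ?_
    obtain ⟨h1, h2⟩ := hr t ht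
    set r := √(T' - t) with hrr
    have hsq : r ^ 2 = T' - t := Real.sq_sqrt (by linarith [ht.2])
    have hbt : |b t - b T| ≤ G * (T - t) := by
      have := (convex_Icc (0:ℝ) T).norm_image_sub_le_of_norm_deriv_le (f := b) (C := G)
        (fun s _ => hb.differentiable one_ne_zero s) (fun s hs => hbG s hs) hTT ht
      simpa only [Real.norm_eq_abs, abs_sub_comm t T, abs_of_nonneg (sub_nonneg.2 ht.2)] using this
    have h3 : T - t ≤ r₁ * r := by nlinarith
    have h4 : |y| ≤ (2 * η - y) + 2 * η := by rw [abs_le]; constructor <;> linarith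
    have h5 : |y + b t - b T| ≤ |y| + |b t - b T| := by
      rw [add_sub_assoc]; exact abs_add_le _ _
    rw [hHdef, mul_assoc]
    refine mul_le_mul_of_nonneg_left ?_ hH₀
    have h6 : (G + 1) * (T - t) ≤ (G + 1) * (r₁ * r) :=
      mul_le_mul_of_nonneg_left h3 (by linarith)
    have h7 : 0 ≤ (1 + (G + 1) * r₁) * (2 * η - y) :=
      mul_nonneg (by positivity) (by linarith)
    nlinarith
  have key := two_phase_bound P F T x₀ Λ Λ G hT μ σ hC1.1 hC1.2.1 hμ hσ X hXad hXcont hXinit hXmp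
    b hb hbG η hη T' hT' (fun t y => κ * η * farFn B N k c T' η t y)
    (nearFn (2 * m' * r₁) (σ₀ ^ 2) T' η)
    (fun p hp => contDiffAt_const.mul (contDiffAt_farFn B N k c T' η p hp))
    (fun p hp => contDiffAt_nearFn _ _ T' η p hp) ?_ ?_ ?_ ?_ ?_ (κ * η * C₀) ?_ β hβ0 ?_
  · rw [div_mul_eq_mul_div, le_div_iff₀ hβ0]
    linarith
  · intro t ht y hy
    rw [shiftGen_const_mul]
    refine mul_nonpos_of_nonneg_of_nonpos (by positivity) ?_
    exact farFn_gen_nonpos H m' r₁ k c B N Λ s T' η t y _ _ hN hB (by rw [hk]; field_simp) hk0.le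
      (by rw [hc]; field_simp) hc0.le (sq_le_sq.2 ((hσ t ht _).trans (le_abs_self _)))
      (hdrift t ht _) (by linarith [ht.2]) (hr t ht).2 (by linarith) (hHt t ht y hy)
      (hNB k hkmem)
  · intro t ht y hy
    exact nearFn_gen_nonpos m' r₁ σ₀ T' η t y _ _ hσ₀ (hσσ t ht _) (hdrift t ht _)
      (by linarith [ht.2]) (hr t ht).2 (by linarith)
  · intro t ht y _
    exact mul_nonneg (by positivity) (farFn_nonneg hN _ _ _ _ _ _ _)
  · intro t ht y hy
    exact scaleFn_nonneg _ _ (div_nonneg (by linarith) (Real.sqrt_nonneg _))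
  · intro t ht y h1 h2
    have h3 := (hr t ht).1
    simp only [nearFn, farFn]
    set r := √(T' - t) with hrr
    have hr0 : 0 < r := hη.trans_le h3
    set u := (2 * η - y) / r with hu
    have hu0 : 0 ≤ u := div_nonneg (by linarith) hr0.le
    have hu1 : u ≤ 4 * η / r := by rw [hu]; gcongr; linarith
    have hu4 : u ≤ 4 := hu1.trans (by rw [div_le_iff₀ hr0]; linarith)
    refine (scaleFn_le _ _ (by positivity) (by positivity) hu0).trans (hu1.trans ?_)
    have hE : Real.exp (-(16 * kb)) ≤ Real.exp (-k * u ^ 2) := by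
      refine Real.exp_le_exp.2 ?_
      have : k * u ^ 2 ≤ kb * 4 ^ 2 := by
        have := hkmem.2
        gcongr
      linarith
    have hB1 : 1 ≤ Real.exp (B * r) := Real.one_le_exp (by positivity)
    have hEE : Real.exp (16 * kb) * Real.exp (-(16 * kb)) = 1 := by
      rw [← Real.exp_add, add_neg_cancel, Real.exp_zero]
    calc 4 * η / r = κ * η * (1 * (Real.exp (-(16 * kb)) / r + 0)) := by
          rw [hκ]
          field_simp
          linear_combination -hEE
      _ ≤ _ := by
          refine mul_le_mul_of_nonneg_left ?_ (by positivity)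
          refine mul_le_mul hB1 (add_le_add ?_ (by positivity)) (by positivity) (by positivity)
          gcongr
  · intro y hy
    refine mul_le_mul_of_nonneg_left ?_ (by positivity)
    simp only [farFn, hC₀]
    have hTr : √T ≤ √(T' - 0) := Real.sqrt_le_sqrt (by linarith)
    refine mul_le_mul (Real.exp_le_exp.2 (mul_le_mul_of_nonneg_left (hr 0 h0T).2 hB))
      (add_le_add ?_ (mul_le_of_le_one_right hN ?_)) (by positivity) (by positivity)
    · refine div_le_div₀ zero_le_one ?_ hsT hTr
      exact Real.exp_le_one_iff.2 (by rw [neg_mul, neg_nonpos]; positivity)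
    · exact Real.exp_le_one_iff.2 (by rw [neg_mul, neg_nonpos]; positivity)
  · intro y hy
    have : √(T' - T) = η := by rw [hT'def, add_sub_cancel_left, Real.sqrt_sq hη.le]
    simp only [nearFn, this]
    refine (scaleFn_mono _ _).monotone ?_
    rw [le_div_iff₀ hη]; linarith

/-! ### Compactness of the Cameron–Martin unit ball -/

lemma InCM.intervalIntegrable {T : ℝ} {h ℓ : ℝ → ℝ} (H : InCM T h ℓ) {s t : ℝ}
    (hs : s ∈ Icc 0 T) (ht : t ∈ Icc 0 T) :
    IntervalIntegrable ℓ volume s t ∧ IntervalIntegrable (fun r => ℓ r ^ 2) volume s t := by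
  have h2 : IntegrableOn (fun r => (1:ℝ) + ℓ r ^ 2) (Icc 0 T) volume :=
    (integrableOn_const (by simp)).add H.2.1
  have h1 : IntegrableOn ℓ (Icc 0 T) volume := by
    refine h2.mono' H.1.aestronglyMeasurable (ae_of_all _ fun r => ?_)
    rw [Real.norm_eq_abs]
    nlinarith [sq_abs (ℓ r), sq_nonneg (|ℓ r| - 1)]
  have hsub : uIcc s t ⊆ Icc 0 T := uIcc_subset_Icc hs ht
  exact ⟨(h1.mono_set hsub).intervalIntegrable, (H.2.1.mono_set hsub).intervalIntegrable⟩

/-- Equicontinuity of the unit sphere. The right side, a form of the bound `|t - s|^{1/2}` from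
the Cauchy–Schwarz inequality, comes from `|ℓ| ≤ (c ℓ² + 1/c)/2`. -/
lemma InCM.modulus {T : ℝ} {h ℓ : ℝ → ℝ} (H : InCM T h ℓ) (h1 : (∫ s in (0:ℝ)..T, ℓ s ^ 2) = 1)
    {c : ℝ} (hc : 0 < c) {s t : ℝ} (hs : s ∈ Icc 0 T) (ht : t ∈ Icc 0 T) :
    |h t - h s| ≤ c / 2 + |t - s| / (2 * c) := by
  wlog hst : s ≤ t generalizing s t
  · rw [abs_sub_comm (h t), abs_sub_comm t]
    exact this ht hs (le_of_not_ge hst)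
  have h0T : (0:ℝ) ∈ Icc 0 T := ⟨le_rfl, hs.1.trans hs.2⟩
  have hTT : T ∈ Icc 0 T := ⟨hs.1.trans hs.2, le_rfl⟩
  obtain ⟨i1, i2⟩ := H.intervalIntegrable hs ht
  rw [H.2.2 t ht, H.2.2 s hs, intervalIntegral.integral_interval_sub_left
    (H.intervalIntegrable h0T ht).1 (H.intervalIntegrable h0T hs).1]
  have hle : (∫ r in s..t, ℓ r ^ 2) ≤ 1 := by
    rw [← h1]
    exact intervalIntegral.integral_mono_interval hs.1 hst ht.2
      (ae_of_all _ fun r => sq_nonneg (ℓ r)) (H.intervalIntegrable h0T hTT).2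
  calc |∫ r in s..t, ℓ r| ≤ ∫ r in s..t, |ℓ r| :=
        intervalIntegral.abs_integral_le_integral_abs hst
    _ ≤ ∫ r in s..t, (c / 2 * ℓ r ^ 2 + 1 / (2 * c)) := by
        refine intervalIntegral.integral_mono_on hst i1.abs
          ((i2.const_mul _).add intervalIntegrable_const) fun r _ => ?_
        have e : c / 2 * ℓ r ^ 2 + 1 / (2 * c) - |ℓ r| = (c * |ℓ r| - 1) ^ 2 / (2 * c) := by
          rw [← sq_abs (ℓ r)]; field_simp; ring
        have : 0 ≤ (c * |ℓ r| - 1) ^ 2 / (2 * c) := by positivity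
        linarith
    _ = c / 2 * (∫ r in s..t, ℓ r ^ 2) + (t - s) * (1 / (2 * c)) := by
        rw [intervalIntegral.integral_add (i2.const_mul _) intervalIntegrable_const,
          intervalIntegral.integral_const_mul, intervalIntegral.integral_const, smul_eq_mul]
    _ ≤ c / 2 + |t - s| / (2 * c) := by
        rw [abs_of_nonneg (sub_nonneg.2 hst), mul_one_div]
        have : c / 2 * (∫ r in s..t, ℓ r ^ 2) ≤ c / 2 * 1 :=
          mul_le_mul_of_nonneg_left hle (by positivity)
        linarith

lemma inH_polynomial (T : ℝ) (p : Polynomial ℝ) (hp : p.eval 0 = 0) :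
    InH T (fun t => p.eval t) := by
  refine ⟨fun t => p.derivative.eval t, p.derivative.continuous.measurable,
    (p.derivative.continuous.pow 2).continuousOn.integrableOn_Icc, fun t _ => ?_⟩
  rw [intervalIntegral.integral_eq_sub_of_hasDerivAt (fun x _ => p.hasDerivAt x)
    (p.derivative.continuous.intervalIntegrable _ _), hp, sub_zero]

/-- The Cameron–Martin unit sphere is totally bounded for the supremum norm, by
equicontinuity, and polynomials can serve as the centres of a finite net. -/
lemma exists_polynomial_net (T : ℝ) (hT : 0 < T) (η : ℝ) (hη : 0 < η) :
    ∃ N : Set (Polynomial ℝ), N.Finite ∧ (∀ p ∈ N, p.eval 0 = 0) ∧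
      ∀ h ℓ : ℝ → ℝ, InCM T h ℓ → (∫ s in (0:ℝ)..T, ℓ s ^ 2) = 1 →
        ∃ p ∈ N, ∀ t ∈ Icc (0:ℝ) T, |h t - p.eval t| ≤ η := by
  have h0T : (0:ℝ) ∈ Icc 0 T := ⟨le_rfl, hT.le⟩
  set c := η / 4 with hc
  have hc0 : 0 < c := by positivity
  obtain ⟨n, hn⟩ := exists_nat_gt (T / c ^ 2)
  have hn0 : (0:ℝ) < n := lt_trans (by positivity) hn
  have hgrid : ∀ i : Fin (n + 1), (i : ℝ) * T / n ∈ Icc 0 T := fun i => by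
    refine ⟨by positivity, ?_⟩
    rw [div_le_iff₀ hn0, mul_comm]
    exact mul_le_mul_of_nonneg_left (by exact_mod_cast Nat.lt_succ_iff.1 i.2) hT.le
  set U : Set (ℝ → ℝ) := {h | ∃ ℓ, InCM T h ℓ ∧ (∫ s in (0:ℝ)..T, ℓ s ^ 2) = 1} with hU
  have hmod : ∀ h ∈ U, ∀ s ∈ Icc 0 T, ∀ t ∈ Icc 0 T, |t - s| ≤ c ^ 2 → |h t - h s| ≤ c := by
    rintro h ⟨ℓ, H, h1⟩ s hs t ht hst
    refine (H.modulus h1 hc0 hs ht).trans ?_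
    have : |t - s| / (2 * c) ≤ c / 2 := by
      rw [div_le_iff₀ (by positivity)]; nlinarith
    linarith
  have hh0 : ∀ h ∈ U, h 0 = 0 := by
    rintro h ⟨ℓ, H, -⟩
    rw [H.2.2 0 h0T, intervalIntegral.integral_same]
  set ev : (ℝ → ℝ) → (Fin (n + 1) → ℝ) := fun h i => h ((i : ℝ) * T / n) with hev
  have htb : TotallyBounded (ev '' U) := by
    refine (isCompact_closedBall (0 : Fin (n + 1) → ℝ) (1 / 2 + T / 2)).totallyBounded.subset ?_
    rintro _ ⟨h, hh, rfl⟩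
    rw [mem_closedBall_zero_iff, pi_norm_le_iff_of_nonneg (by positivity)]
    intro i
    obtain ⟨ℓ, H, h1⟩ := id hh
    have := H.modulus h1 one_pos h0T (hgrid i)
    rw [hh0 h hh, sub_zero, sub_zero, abs_of_nonneg (hgrid i).1] at this
    rw [Real.norm_eq_abs]
    have h2 := (hgrid i).2
    simp only [hev]
    linarith
  obtain ⟨S, hSU, hSf, hS⟩ := Metric.finite_approx_of_totallyBounded htb c hc0
  have hpoly : ∀ v ∈ S, ∃ p : Polynomial ℝ, p.eval 0 = 0 ∧ ∃ h ∈ U, ev h = v ∧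
      ∀ t ∈ Icc (0:ℝ) T, |p.eval t - h t| ≤ c := by
    intro v hv
    obtain ⟨h, hh, rfl⟩ := hSU hv
    have hcont : ContinuousOn h (Icc 0 T) := by
      obtain ⟨ℓ, H, -⟩ := hh
      refine ContinuousOn.congr ?_ H.2.2
      have := intervalIntegral.continuousOn_primitive_interval (μ := volume) (f := ℓ)
        (a := 0) (b := T) ?_
      · rwa [uIcc_of_le hT.le] at this
      · rw [uIcc_of_le hT.le, integrableOn_Icc_iff_integrableOn_Ioc,
          ← intervalIntegrable_iff_integrableOn_Ioc_of_le hT.le]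
        exact (H.intervalIntegrable h0T ⟨hT.le, le_rfl⟩).1
    obtain ⟨p, hp⟩ := exists_polynomial_near_of_continuousOn 0 T h hcont (c / 2) (by positivity)
    refine ⟨p - Polynomial.C (p.eval 0), by simp, h, hh, rfl, fun t ht => ?_⟩
    have e1 := abs_lt.1 (hp t ht)
    have e2 := abs_lt.1 (hp 0 h0T)
    rw [hh0 h hh] at e2
    rw [Polynomial.eval_sub, Polynomial.eval_C, abs_le]
    constructor <;> linarith [e1.1, e1.2, e2.1, e2.2]
  choose! p hp0 hp using hpoly
  refine ⟨p '' S, hSf.image p, by rintro _ ⟨v, hv, rfl⟩; exact hp0 v hv, fun h ℓ H h1 => ?_⟩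
  have hhU : h ∈ U := ⟨ℓ, H, h1⟩
  obtain ⟨v, hv, hvb⟩ := mem_iUnion₂.1 (hS ⟨h, hhU, rfl⟩)
  obtain ⟨h', hh'U, hev', hph'⟩ := hp v hv
  refine ⟨p v, ⟨v, hv, rfl⟩, fun t ht => ?_⟩
  -- compare at the last grid point before `t`
  have hx : 0 ≤ t * n / T := by have := ht.1; positivity
  have hk1 := Nat.floor_le hx
  have hk2 := Nat.lt_floor_add_one (t * n / T)
  have hkn : ⌊t * n / T⌋₊ ≤ n := by
    have : t * n / T ≤ n := by
      rw [div_le_iff₀ hT, mul_comm]; exact mul_le_mul_of_nonneg_left ht.2 hn0.le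
    exact_mod_cast hk1.trans this
  set i : Fin (n + 1) := ⟨⌊t * n / T⌋₊, Nat.lt_succ_iff.2 hkn⟩ with hi
  have hclose : |t - (i : ℝ) * T / n| ≤ c ^ 2 := by
    have hTn : T / n ≤ c ^ 2 := by
      rw [div_lt_iff₀ (by positivity)] at hn
      rw [div_le_iff₀ hn0]; linarith
    have e1 : (i : ℝ) * T / n ≤ t := by
      rw [div_le_iff₀ hn0]
      rwa [le_div_iff₀ hT] at hk1
    have e2 : t < (i : ℝ) * T / n + T / n := by
      rw [← add_div, lt_div_iff₀ hn0]
      rw [div_lt_iff₀ hT] at hk2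
      simp only [hi]
      linarith
    rw [abs_of_nonneg (by linarith)]
    linarith
  have a1 := abs_le.1 (hmod h hhU _ (hgrid i) t ht hclose)
  have a2 := abs_le.1 (hmod h' hh'U _ (hgrid i) t ht hclose)
  have a3 : |h ((i : ℝ) * T / n) - h' ((i : ℝ) * T / n)| < c := by
    have := (dist_le_pi_dist (ev h) v i).trans_lt (Metric.mem_ball.1 hvb)
    rwa [← hev', Real.dist_eq] at this
  have a3 := abs_lt.1 a3
  have a4 := abs_le.1 (hph' t ht)
  rw [abs_le]
  constructor <;> linarith [a1.1, a1.2, a2.1, a2.2, a3.1, a3.2, a4.1, a4.2]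

/-! ### Extension of the boundary, and the proof of differentiability -/

lemma exists_extension (T : ℝ) (hT : 0 < T) (g : ℝ → ℝ) (hg : ContDiffOn ℝ 2 g (Icc 0 T)) :
    ∃ f : ℝ → ℝ, ContDiff ℝ 1 f ∧ ∀ t ∈ Icc (0:ℝ) T, f t = g t := by
  have hc : ContinuousOn (derivWithin g (Icc 0 T)) (Icc 0 T) :=
    hg.continuousOn_derivWithin (uniqueDiffOn_Icc hT) one_le_two
  set e : ℝ → ℝ := IccExtend hT.le ((Icc 0 T).domRestrict (derivWithin g (Icc 0 T))) with he
  have hec : Continuous e := hc.domRestrict.Icc_extend'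
  have hd : ∀ t, HasDerivAt (fun t => g 0 + ∫ s in (0:ℝ)..t, e s) (e t) t := fun t =>
    (intervalIntegral.integral_hasDerivAt_right (hec.intervalIntegrable _ _)
      (hec.stronglyMeasurableAtFilter _ _) hec.continuousAt).const_add _
  refine ⟨fun t => g 0 + ∫ s in (0:ℝ)..t, e s, ?_, fun t ht => ?_⟩
  · rw [contDiff_one_iff_deriv]
    refine ⟨fun t => (hd t).differentiableAt, ?_⟩
    rw [show deriv (fun t => g 0 + ∫ s in (0:ℝ)..t, e s) = e from funext fun t => (hd t).deriv]
    exact hec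
  · have := intervalIntegral.integral_eq_sub_of_hasDerivAt_of_le (f := g) (f' := e) ht.1
      (hg.continuousOn.mono (Icc_subset_Icc_right ht.2)) (fun x hx => ?_)
      (hec.intervalIntegrable _ _)
    · show g 0 + _ = _
      rw [this]; ring
    · have hx' : x ∈ Icc 0 T := ⟨hx.1.le, hx.2.le.trans ht.2⟩
      rw [he, IccExtend_of_mem _ _ hx']
      exact ((hg.differentiableOn two_ne_zero x hx').hasDerivWithinAt).hasDerivAt
        (Icc_mem_nhds hx.1 (hx.2.trans_le ht.2))

/-- If `b'` is within `η` of `b`, then on the event where exactly one of the two is crossed the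
path comes within `η` of `b` but stays below `b + η`. -/
lemma abs_FncF_sub_le [m : MeasurableSpace Ω] (P : Measure Ω) [IsProbabilityMeasure P]
    (T x₀ : ℝ) (X : ℝ → ℝ → ℝ → Ω → ℝ) (b b' : ℝ → ℝ) (η : ℝ) (hη : 0 ≤ η)
    (h : ∀ t ∈ Icc (0:ℝ) T, |b' t - b t| ≤ η) :
    |FncF T x₀ P X b' - FncF T x₀ P X b| ≤
      P.real {ω | (∀ t ∈ Icc (0:ℝ) T, X 0 x₀ t ω < b t + η) ∧
        ∃ t ∈ Icc (0:ℝ) T, b t - η ≤ X 0 x₀ t ω} := by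
  have h' : ∀ t ∈ Icc (0:ℝ) T, b' t ≤ b t + η ∧ b t - η ≤ b' t := fun t ht => by
    have := abs_le.1 (h t ht)
    constructor <;> linarith [this.1, this.2]
  set A := {ω | (∀ t ∈ Icc (0:ℝ) T, X 0 x₀ t ω < b t + η) ∧
        ∃ t ∈ Icc (0:ℝ) T, b t - η ≤ X 0 x₀ t ω}
  have h1 : P.real {ω | ∀ t ∈ Icc (0:ℝ) T, X 0 x₀ t ω < b' t} ≤
      P.real {ω | ∀ t ∈ Icc (0:ℝ) T, X 0 x₀ t ω < b t} + P.real A := by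
    refine (measureReal_mono fun ω hω => ?_).trans (measureReal_union_le _ _)
    by_cases hb : ∀ t ∈ Icc (0:ℝ) T, X 0 x₀ t ω < b t
    · exact Or.inl hb
    · push Not at hb
      obtain ⟨t, ht, hbt⟩ := hb
      exact Or.inr ⟨fun s hs => (hω s hs).trans_le (h' s hs).1, t, ht, by linarith⟩
  have h2 : P.real {ω | ∀ t ∈ Icc (0:ℝ) T, X 0 x₀ t ω < b t} ≤
      P.real {ω | ∀ t ∈ Icc (0:ℝ) T, X 0 x₀ t ω < b' t} + P.real A := by
    refine (measureReal_mono fun ω hω => ?_).trans (measureReal_union_le _ _)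
    by_cases hb : ∀ t ∈ Icc (0:ℝ) T, X 0 x₀ t ω < b' t
    · exact Or.inl hb
    · push Not at hb
      obtain ⟨t, ht, hbt⟩ := hb
      exact Or.inr ⟨fun s hs => (hω s hs).trans_le (by linarith), t, ht,
        (h' t ht).2.trans hbt⟩
  simp only [FncF]
  simp only [Measure.real] at h1 h2 ⊢
  rw [abs_le]
  constructor <;> linarith

/-- Theorem 4: `F` is `H`-differentiable (Fréchet differentiable along the
Cameron–Martin directions) at `g`: denoting by `D h = ∇ₕF(g)` the Gâteaux derivative (whose
existence for `h ∈ H` is established separately and is taken as a hypothesis),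
`sup_{h ∈ H, ‖h‖_H = 1} |F(g+εh) − F(g) − ε∇ₕF(g)| = o(ε)` as `ε → 0`. -/
theorem F_is_H_differentiable
    [m : MeasurableSpace Ω] (P : Measure Ω) [IsProbabilityMeasure P]
    (F : Filtration ℝ m) (T x₀ α : ℝ) (hT : 0 < T) (hα : α ∈ Ioo (0:ℝ) 1)
    (μ σ : ℝ → ℝ → ℝ) (hC1 : CondC1 T μ σ) (hC2 : CondC2 T σ) (hC3 : CondC3 T α μ σ)
    (g : ℝ → ℝ) (hg : ContDiffOn ℝ 2 g (Icc 0 T)) (hg0 : x₀ < g 0)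
    (X : ℝ → ℝ → ℝ → Ω → ℝ)
    (hXad : ∀ s x : ℝ, Adapted F (X s x))
    (hXcont : ∀ s x : ℝ, ∀ ω, ContinuousOn (fun u => X s x u ω) (Icc s T))
    (hXinit : ∀ s x : ℝ, ∀ ω, X s x s ω = x)
    (hXmp : SolvesMP T μ σ P F X)
    (D : (ℝ → ℝ) → ℝ)
    (hD : ∀ h : ℝ → ℝ, InH T h →
      Tendsto (fun δ : ℝ =>
          (FncF T x₀ P X (fun t => g t + δ * h t) - FncF T x₀ P X g) / δ)
        (𝓝[≠] (0:ℝ)) (𝓝 (D h))) :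
    ∀ c : ℝ, 0 < c → ∀ᶠ ε : ℝ in 𝓝[≠] (0:ℝ),
      ∀ h ℓ : ℝ → ℝ, InCM T h ℓ → (∫ s in (0:ℝ)..T, ℓ s ^ 2) = 1 →
        |FncF T x₀ P X (fun t => g t + ε * h t) - FncF T x₀ P X g - ε * D h| ≤ c * |ε| := by
  intro c hc
  obtain ⟨f, hf, hfg⟩ := exists_extension T hT g hg
  have hTT : T ∈ Icc 0 T := ⟨hT.le, le_rfl⟩
  obtain ⟨G₁, hG₁⟩ := isCompact_Icc.exists_bound_of_continuousOn (s := Icc (0:ℝ) T)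
    (hf.continuous_deriv le_rfl).continuousOn
  have hG₁0 : 0 ≤ G₁ := (norm_nonneg _).trans (hG₁ T hTT)
  obtain ⟨C, hC, hlayer⟩ := exists_layer_bound P F T x₀ α (G₁ + |g T| + 1) hT hα.1 (by positivity)
    μ σ hC1 hC2 hC3 X hXad hXcont hXinit hXmp
  set η := c / (4 * C) with hη
  have hη0 : 0 < η := by positivity
  have hCη : C * η = c / 4 := by rw [hη]; field_simp
  obtain ⟨N, hNf, hN0, hN⟩ := exists_polynomial_net T hT η hη0
  have hsmall : ∀ K : ℝ, ∀ᶠ ε : ℝ in 𝓝[≠] (0:ℝ), |ε| * K < 1 := fun K => by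
    have : Tendsto (fun ε : ℝ => |ε| * K) (𝓝 0) (𝓝 (|0| * K)) :=
      (continuous_abs.mul continuous_const).tendsto 0
    rw [abs_zero, zero_mul] at this
    exact (this.mono_left nhdsWithin_le_nhds).eventually_lt_const one_pos
  -- changing the direction by at most `η` changes `F` by at most `(c / 4) * |ε|`
  have hunif : ∀ p : Polynomial ℝ, ∀ᶠ ε : ℝ in 𝓝[≠] (0:ℝ), ∀ h : ℝ → ℝ,
      (∀ t ∈ Icc (0:ℝ) T, |h t - p.eval t| ≤ η) →
      |FncF T x₀ P X (fun t => g t + ε * h t) - FncF T x₀ P X (fun t => g t + ε * p.eval t)| ≤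
        c / 4 * |ε| := by
    intro p
    obtain ⟨K, hK⟩ := isCompact_Icc.exists_bound_of_continuousOn (s := Icc (0:ℝ) T)
      p.derivative.continuous.continuousOn
    filter_upwards [hsmall K, hsmall |p.eval T|, hsmall η, self_mem_nhdsWithin]
      with ε h1 h2 h3 h4 h hh
    have hε : 0 < |ε| := abs_pos.2 h4
    set b : ℝ → ℝ := fun t => f t + ε * p.eval t with hb
    have hbd : ContDiff ℝ 1 b := hf.add (contDiff_const.mul (by simpa using p.contDiff_aeval (𝕜 := ℝ) 1))
    have hF : FncF T x₀ P X (fun t => g t + ε * p.eval t) = FncF T x₀ P X b := by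
      simp only [FncF]
      congr 3
      ext ω
      refine forall₂_congr fun t ht => ?_
      simp only [hb, hfg t ht]
    rw [hF]
    refine (abs_FncF_sub_le P T x₀ X b _ (|ε| * η) (by positivity) fun t ht => ?_).trans ?_
    · simp only [hb]
      rw [hfg t ht, show g t + ε * h t - (g t + ε * p.eval t) = ε * (h t - p.eval t) by ring,
        abs_mul]
      exact mul_le_mul_of_nonneg_left (hh t ht) hε.le
    · refine (hlayer b hbd (fun t ht => ?_) ?_ (|ε| * η) (by positivity) h3.le).trans_eq ?_
      · have hd : deriv b t = deriv f t + ε * p.derivative.eval t :=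
          ((hf.differentiable one_ne_zero t).hasDerivAt.add
            ((p.hasDerivAt t).const_mul ε)).deriv
        rw [hd]
        refine (abs_add_le _ _).trans ?_
        have e1 := hG₁ t ht
        have e2 := mul_le_mul_of_nonneg_left (hK t ht) hε.le
        rw [Real.norm_eq_abs] at e1 e2
        rw [abs_mul]
        linarith [abs_nonneg (g T)]
      · simp only [hb]
        rw [hfg T hTT]
        refine (abs_add_le _ _).trans ?_
        rw [abs_mul]
        linarith
      · rw [mul_left_comm, hCη, mul_comm]
  -- the derivative inherits the same modulus of continuity
  have hDD : ∀ p ∈ N, ∀ h ℓ : ℝ → ℝ, InCM T h ℓ →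
      (∀ t ∈ Icc (0:ℝ) T, |h t - p.eval t| ≤ η) → |D h - D (fun t => p.eval t)| ≤ c / 4 := by
    intro p hp h ℓ H hh
    have hlim := ((hD h ⟨ℓ, H⟩).sub (hD _ (inH_polynomial T p (hN0 p hp)))).abs
    refine le_of_tendsto hlim ?_
    filter_upwards [hunif p, self_mem_nhdsWithin] with ε h1 h2
    rw [← sub_div, sub_sub_sub_cancel_right, abs_div, div_le_iff₀ (abs_pos.2 h2)]
    exact h1 h hh
  have hpD : ∀ p ∈ N, ∀ᶠ ε : ℝ in 𝓝[≠] (0:ℝ),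
      |FncF T x₀ P X (fun t => g t + ε * p.eval t) - FncF T x₀ P X g
        - ε * D (fun t => p.eval t)| ≤ c / 4 * |ε| := by
    intro p hp
    have := (Metric.tendsto_nhds.1 (hD _ (inH_polynomial T p (hN0 p hp)))) (c / 4) (by positivity)
    filter_upwards [this, self_mem_nhdsWithin] with ε h1 h2
    have h2' : ε ≠ 0 := h2
    rw [Real.dist_eq] at h1
    rw [show FncF T x₀ P X (fun t => g t + ε * p.eval t) - FncF T x₀ P X g
        - ε * D (fun t => p.eval t) =
        ((FncF T x₀ P X (fun t => g t + ε * p.eval t) - FncF T x₀ P X g) / ε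
          - D (fun t => p.eval t)) * ε by field_simp, abs_mul]
    exact mul_le_mul_of_nonneg_right h1.le (abs_nonneg _)
  filter_upwards [(eventually_all_finite hNf).2 hpD,
    (eventually_all_finite hNf).2 fun p _ => hunif p] with ε h1 h2 h ℓ H hℓ
  obtain ⟨p, hp, hhp⟩ := hN h ℓ H hℓ
  have a1 := abs_le.1 (h1 p hp)
  have a2 := abs_le.1 (h2 p hp h hhp)
  have a3 : |ε * D (fun t => p.eval t) - ε * D h| ≤ c / 4 * |ε| := by
    rw [← mul_sub, abs_mul, abs_sub_comm, mul_comm]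
    exact mul_le_mul_of_nonneg_right (hDD p hp h ℓ H hhp) (abs_nonneg _)
  have a3 := abs_le.1 a3
  have a4 : 0 ≤ c * |ε| := by positivity
  rw [abs_le]
  constructor <;> linarith [a1.1, a1.2, a2.1, a2.2, a3.1, a3.2]
end
end

section
/- For every φ ∈ L¹([0,T]), lim_{n→∞} ∫_0^T h_n(t) φ(t) dt = (T²/12) ∫_0^T g̈(t) φ(t) dt. -/
open MeasureTheory Set Filter Topology

/-!
On a cell `[a, b]` of length `T / n` the interpolation error is
`g_n(t) - g(t) = (t - a) (b - t) / 2 * g''(ξ)` for some `ξ` in the cell. With `s` the fractional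
part of `n t / T` this says `n² (g_n(t) - g(t)) = T² / 2 * s (1 - s) * g''(ξ)`
(`exists_scaled_error`). Since `g''` is bounded and continuous on `(0, T)`, dominated convergence
allows `g''(ξ)` to be replaced by `g''(t)` in the limit.

It remains to see that the oscillating weight `s (1 - s)` converges weakly to its mean `1 / 6`
against the integrable function `g'' φ` (`tendsto_integral_fract_mul`). Its Fourier expansion is
`s (1 - s) = 1 / 6 - π⁻² ∑ cos (2 π m n t / T) / m²` (the second Bernoulli polynomial); by the
Riemann–Lebesgue lemma each cosine integrates to `0` in the limit, and the coefficients are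
absolutely summable.
-/

noncomputable section

/-- The Fourier series of the 1-periodic second Bernoulli polynomial `x² - x + 1/6`. At `m = 0` the
coefficient `1 / 0 ^ 2` is zero, so that the sum is really over `m ≥ 1`. -/
theorem hasSum_bernoulli_two_fract (x : ℝ) :
    HasSum (fun m : ℕ => 1 / (m : ℝ) ^ 2 * Real.cos (2 * Real.pi * m * x))
      (Real.pi ^ 2 * (1 / 6 - Int.fract x * (1 - Int.fract x))) := by
  have h := hasSum_one_div_nat_pow_mul_cos (k := 1) one_ne_zero (x := Int.fract x)
    ⟨Int.fract_nonneg x, (Int.fract_lt_one x).le⟩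
  convert h using 1
  · funext m
    have : Real.cos (2 * Real.pi * m * Int.fract x) = Real.cos (2 * Real.pi * m * x) := by
      rw [← Real.cos_sub_int_mul_two_pi (2 * Real.pi * m * x) (m * ⌊x⌋), Int.fract]
      congr 1
      push_cast
      ring
    rw [this]
  · simp [Polynomial.bernoulli_def, Finset.sum_range_succ, bernoulli_one, bernoulli_two,
      Polynomial.eval_monomial]
    ring

/-- The Riemann–Lebesgue lemma for cosines along the frequencies `c * n`. -/
theorem tendsto_integral_cos_mul {ψ : ℝ → ℝ} (hψ : Integrable ψ) {c : ℝ} (hc : 0 < c) :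
    Tendsto (fun n : ℕ => ∫ t, Real.cos (2 * Real.pi * (c * n * t)) * ψ t) atTop (𝓝 0) := by
  have h1 : Tendsto (fun n : ℕ => c * (n : ℝ)) atTop (cocompact ℝ) :=
    (tendsto_natCast_atTop_atTop.const_mul_atTop hc).mono_right atTop_le_cocompact
  have h2 := (Real.tendsto_integral_exp_smul_cocompact (fun t => (ψ t : ℂ))).comp h1
  have h3 := (Complex.continuous_re.tendsto _).comp h2
  rw [Complex.zero_re] at h3
  refine h3.congr fun n => ?_
  have hi : Integrable (fun v : ℝ => Real.fourierChar (-(v * (c * n))) • (ψ v : ℂ)) := by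
    have := (Real.fourierIntegral_convergent_iff' (innerSL ℝ) (μ := volume)
      (f := fun t => (ψ t : ℂ)) (c * n : ℝ)).2 hψ.ofReal
    refine this.congr (ae_of_all _ fun v => ?_)
    change Real.fourierChar (-(inner ℝ v (c * n : ℝ))) • (ψ v : ℂ) = _
    rw [real_inner_comm, RCLike.inner_apply, conj_trivial]
  simp only [Function.comp_def]
  have := integral_re hi
  simp only [RCLike.re_to_complex] at this
  rw [← this]
  refine integral_congr_ae (ae_of_all _ fun v => ?_)
  simp only [Circle.smul_def, Real.fourierChar_apply, smul_eq_mul, Complex.re_mul_ofReal,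
    Complex.exp_ofReal_mul_I_re]
  rw [← Real.cos_neg]
  congr 2
  ring

/-- The rescaled 1-periodic function `s ↦ s (1 - s)` converges to its mean `1 / 6`, weakly against
`L¹` functions. -/
theorem tendsto_integral_fract_mul {ψ : ℝ → ℝ} (hψ : Integrable ψ) {c : ℝ} (hc : 0 < c) :
    Tendsto (fun n : ℕ => ∫ t, Int.fract (c * n * t) * (1 - Int.fract (c * n * t)) * ψ t)
      atTop (𝓝 (1 / 6 * ∫ t, ψ t)) := by
  have hsum : Summable fun m : ℕ => 1 / (m : ℝ) ^ 2 := by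
    simp
  have hcos (x : ℝ) (m : ℕ) :
      |1 / (m : ℝ) ^ 2 * Real.cos x| ≤ 1 / (m : ℝ) ^ 2 := by
    rw [abs_mul, abs_of_nonneg (by positivity : (0 : ℝ) ≤ 1 / (m : ℝ) ^ 2)]
    exact mul_le_of_le_one_right (by positivity) (Real.abs_cos_le_one _)
  have key (n : ℕ) : HasSum
      (fun m : ℕ => ∫ t, 1 / (m : ℝ) ^ 2 * Real.cos (2 * Real.pi * m * (c * n * t)) * ψ t)
      (∫ t, Real.pi ^ 2 * (1 / 6 - Int.fract (c * n * t) * (1 - Int.fract (c * n * t))) * ψ t) := by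
    refine hasSum_integral_of_dominated_convergence
      (fun m t => 1 / (m : ℝ) ^ 2 * |ψ t|) (fun m => ?_) (fun m => ae_of_all _ fun t => ?_)
      (ae_of_all _ fun t => hsum.mul_right _) ?_ (ae_of_all _ fun t => ?_)
    · exact (Continuous.aestronglyMeasurable (by fun_prop)).mul hψ.aestronglyMeasurable
    · rw [Real.norm_eq_abs, abs_mul]
      exact mul_le_mul_of_nonneg_right (hcos _ _) (abs_nonneg _)
    · simp_rw [tsum_mul_right]
      exact hψ.abs.const_mul _
    · exact (hasSum_bernoulli_two_fract _).mul_right _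
  have lim : Tendsto (fun n : ℕ => ∑' m : ℕ,
      ∫ t, 1 / (m : ℝ) ^ 2 * Real.cos (2 * Real.pi * m * (c * n * t)) * ψ t) atTop
      (𝓝 (∑' _ : ℕ, 0)) := by
    refine tendsto_tsum_of_dominated_convergence (hsum.mul_right (∫ t, |ψ t|))
      (fun m => ?_) (Eventually.of_forall fun n m => ?_)
    · rcases Nat.eq_zero_or_pos m with rfl | hm
      · simp
      · have h := (tendsto_integral_cos_mul hψ (c := m * c) (by positivity)).const_mul
          (1 / (m : ℝ) ^ 2)
        rw [mul_zero] at h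
        refine h.congr fun n => ?_
        rw [← integral_const_mul]
        refine integral_congr_ae (ae_of_all _ fun t => ?_)
        simp only
        rw [show 2 * Real.pi * (m * c * n * t) = 2 * Real.pi * m * (c * n * t) by ring]
        ring
    · rw [← integral_const_mul]
      refine norm_integral_le_of_norm_le (hψ.abs.const_mul _) (ae_of_all _ fun t => ?_)
      rw [Real.norm_eq_abs, abs_mul]
      exact mul_le_mul_of_nonneg_right (hcos _ _) (abs_nonneg _)
  rw [tsum_zero] at lim
  have lim2 := (lim.const_mul (1 / Real.pi ^ 2)).const_sub (1 / 6 * ∫ t, ψ t)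
  rw [mul_zero, sub_zero] at lim2
  refine lim2.congr fun n => ?_
  rw [(key n).tsum_eq, ← integral_const_mul, ← integral_const_mul, ← integral_sub]
  · refine integral_congr_ae (ae_of_all _ fun t => ?_)
    have := Real.pi_ne_zero
    simp only
    field_simp
    ring
  · exact hψ.const_mul _
  · refine Integrable.const_mul (hψ.bdd_mul (c := Real.pi ^ 2) ?_ (ae_of_all _ fun t => ?_)) _
    · exact Measurable.aestronglyMeasurable (by fun_prop)
    · have h0 := Int.fract_nonneg (c * n * t)
      have h1 := (Int.fract_lt_one (c * n * t)).le
      rw [Real.norm_eq_abs, abs_mul, abs_of_pos (by positivity : 0 < Real.pi ^ 2)]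
      refine mul_le_of_le_one_right (by positivity) (abs_le.2 ⟨?_, ?_⟩) <;> nlinarith

/-- The classical error formula for linear interpolation of a `C²` function, obtained from
Rolle's theorem. -/
theorem exists_interpolation_error {g : ℝ → ℝ} {a b t : ℝ} {s : Set ℝ} (hs : Ioo a b ⊆ s)
    (hso : IsOpen s) (hc : ContinuousOn g (Icc a b)) (hg : ContDiffOn ℝ 2 g s)
    (ht : t ∈ Ioo a b) :
    ∃ ξ ∈ Ioo a b, g a + (t - a) * (g b - g a) / (b - a) - g t =
      (t - a) * (b - t) / 2 * deriv (deriv g) ξ := by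
  obtain ⟨hat, htb⟩ := ht
  have hab : a < b := hat.trans htb
  have h1 (x) (hx : x ∈ Ioo a b) : HasDerivAt g (deriv g x) x :=
    ((hg.differentiableOn (by norm_num)).differentiableAt (hso.mem_nhds (hs hx))).hasDerivAt
  have h2 (x) (hx : x ∈ Ioo a b) : HasDerivAt (deriv g) (deriv (deriv g) x) x :=
    (((hg.deriv_of_isOpen hso (m := 1) (by norm_num)).differentiableOn (by norm_num)).differentiableAt
      (hso.mem_nhds (hs hx))).hasDerivAt
  set d : ℝ := (g b - g a) / (b - a) with hd
  set K : ℝ := (g a + (t - a) * d - g t) / ((t - a) * (b - t)) with hK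
  have hba : b - a ≠ 0 := (sub_pos.2 hab).ne'
  have hta : t - a ≠ 0 := (sub_pos.2 hat).ne'
  have hbt : b - t ≠ 0 := (sub_pos.2 htb).ne'
  have hdb : d * (b - a) = g b - g a := by rw [hd]; field_simp
  have hKt : K * ((t - a) * (b - t)) = g a + (t - a) * d - g t := by rw [hK]; field_simp
  -- `K` is chosen so that `w` vanishes at `a`, `t` and `b`; by Rolle applied twice, `w''` vanishes
  -- somewhere in between.
  let w : ℝ → ℝ := fun x => g a + (x - a) * d - g x - K * ((x - a) * (b - x))
  have hw (x) (hx : x ∈ Ioo a b) :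
      HasDerivAt w (d - deriv g x - K * ((b - x) - (x - a))) x := by
    have e := (((((hasDerivAt_id x).sub_const a).mul_const d).const_add (g a)).sub (h1 x hx)).sub
      ((((hasDerivAt_id x).sub_const a).mul ((hasDerivAt_id x).const_sub b)).const_mul K)
    refine e.congr_deriv ?_
    simp only [id]
    ring
  have hw' (x) (hx : x ∈ Ioo a b) :
      HasDerivAt (fun x => d - deriv g x - K * ((b - x) - (x - a)))
        (- deriv (deriv g) x + 2 * K) x := by
    have e := ((h2 x hx).const_sub d).sub
      ((((hasDerivAt_id x).const_sub b).sub ((hasDerivAt_id x).sub_const a)).const_mul K)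
    refine e.congr_deriv ?_
    ring
  have hwc : ContinuousOn w (Icc a b) := by fun_prop
  have wa : w a = 0 := by simp [w]
  have wt : w t = 0 := by simp only [w]; linarith
  have wb : w b = 0 := by simp only [w]; linear_combination hdb
  obtain ⟨x₁, hx₁, e₁⟩ := exists_hasDerivAt_eq_zero hat (hwc.mono (Icc_subset_Icc_right htb.le))
    (wa.trans wt.symm) (fun x hx => hw x ⟨hx.1, hx.2.trans htb⟩)
  obtain ⟨x₂, hx₂, e₂⟩ := exists_hasDerivAt_eq_zero htb (hwc.mono (Icc_subset_Icc_left hat.le))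
    (wt.trans wb.symm) (fun x hx => hw x ⟨hat.trans hx.1, hx.2⟩)
  have hsub : Icc x₁ x₂ ⊆ Ioo a b := fun x hx => ⟨hx₁.1.trans_le hx.1, hx.2.trans_lt hx₂.2⟩
  obtain ⟨ξ, hξ, e⟩ := exists_hasDerivAt_eq_zero (hx₁.2.trans hx₂.1)
    (fun x hx => (hw' x (hsub hx)).continuousAt.continuousWithinAt) (e₁.trans e₂.symm)
    (fun x hx => hw' x (hsub (Ioo_subset_Icc_self hx)))
  refine ⟨ξ, hsub (Ioo_subset_Icc_self hξ), ?_⟩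
  rw [mul_div_assoc, ← hd, ← hKt]
  linear_combination ((t - a) * (b - t) / 2) * e

/-- The cell of the uniform partition of `[0, T]` containing `t` has index `⌊n t / T⌋₊`. -/
theorem floor_cell {T t : ℝ} (hT : 0 < T) {n : ℕ} (hn : 0 < n) (ht : t ∈ Ioo 0 T) :
    ⌊1 / T * n * t⌋₊ < n ∧ (⌊1 / T * n * t⌋₊ : ℝ) * T / n ≤ t ∧
      t < ((⌊1 / T * n * t⌋₊ : ℝ) + 1) * T / n := by
  have hn' : (0 : ℝ) < n := by exact_mod_cast hn
  have h0 : 0 ≤ 1 / T * n * t := mul_nonneg (by positivity) ht.1.le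
  have e : 1 / T * n * t * T / n = t := by field_simp
  refine ⟨(Nat.floor_lt h0).2 ?_, ?_, ?_⟩
  · have : 1 / T * n * t = n * (t / T) := by ring
    rw [this]
    exact mul_lt_of_lt_one_right hn' ((div_lt_one hT).2 ht.2)
  · conv_rhs => rw [← e]
    gcongr
    exact Nat.floor_le h0
  · conv_lhs => rw [← e]
    gcongr
    exact Nat.lt_floor_add_one _

/-- The error formula after rescaling: the product `(t - a) (b - t)` depends only on the fractional
part of `n t / T`. -/
theorem exists_scaled_error {T : ℝ} (hT : 0 < T) {g : ℝ → ℝ}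
    (hg : ContDiffOn ℝ 2 g (Icc 0 T)) {n : ℕ} (hn : 0 < n) {f : ℝ → ℝ}
    (hf : ∀ k : ℕ, k < n →
      ∀ t ∈ Icc ((k : ℝ) * T / n) (((k : ℝ) + 1) * T / n),
        f t = g ((k : ℝ) * T / n) +
          (t - (k : ℝ) * T / n) *
            (g (((k : ℝ) + 1) * T / n) - g ((k : ℝ) * T / n)) / (T / n))
    {t : ℝ} (ht : t ∈ Ioo 0 T) :
    ∃ ξ ∈ Ioo 0 T, |ξ - t| ≤ T / n ∧ (n : ℝ) ^ 2 * (f t - g t) =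
      T ^ 2 / 2 * (Int.fract (1 / T * n * t) * (1 - Int.fract (1 / T * n * t))) *
        deriv (deriv g) ξ := by
  have hn' : (0 : ℝ) < n := by exact_mod_cast hn
  obtain ⟨hk, hkt, htk⟩ := floor_cell hT hn ht
  generalize ⌊1 / T * n * t⌋₊ = k at hk hkt htk
  have hkn : (k : ℝ) + 1 ≤ n := by exact_mod_cast hk
  have ha0 : 0 ≤ (k : ℝ) * T / n := by positivity
  have hbT : ((k : ℝ) + 1) * T / n ≤ T := by
    rw [div_le_iff₀ hn', mul_comm T]
    exact mul_le_mul_of_nonneg_right hkn hT.le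
  have hba : ((k : ℝ) + 1) * T / n - k * T / n = T / n := by ring
  have hfr : Int.fract (1 / T * n * t) = (t - k * T / n) * (n / T) := by
    rw [Int.fract_eq_iff]
    refine ⟨mul_nonneg (sub_nonneg.2 hkt) (by positivity), ?_, k, ?_⟩
    · have : (t - k * T / n) * (n / T) < T / n * (n / T) :=
        mul_lt_mul_of_pos_right (by linarith) (by positivity)
      rwa [div_mul_div_cancel₀ hn'.ne', div_self hT.ne'] at this
    · push_cast
      field_simp
      ring
  have hft := hf k hk t ⟨hkt, htk.le⟩
  rcases hkt.eq_or_lt with h | h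
  · -- at a node both sides vanish
    refine ⟨t, ht, by simp; positivity, ?_⟩
    rw [hft, hfr, h]
    simp
  · obtain ⟨ξ, hξ, e⟩ := exists_interpolation_error (g := g) (s := Ioo 0 T)
      (Ioo_subset_Ioo ha0 hbT) isOpen_Ioo
      (hg.continuousOn.mono (Icc_subset_Icc ha0 hbT)) (hg.mono Ioo_subset_Icc_self) ⟨h, htk⟩
    refine ⟨ξ, Ioo_subset_Ioo ha0 hbT hξ, ?_, ?_⟩
    · obtain ⟨h1, h2⟩ := hξ
      exact abs_le.2 ⟨by linarith, by linarith⟩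
    · rw [hba] at e
      rw [hft, e, hfr]
      field_simp
      ring

/-- let `g ∈ C²([0,T])` with bounded second derivative, let `g_n` be the
piecewise linear interpolation of `g` with nodes `(kT/n, g(kT/n))`, `k = 0,…,n`, and set
`h_n = n²(g_n − g)`. Then for every `φ ∈ L¹([0,T])`,
`lim_{n→∞} ∫₀ᵀ h_n(t) φ(t) dt = (T²/12) ∫₀ᵀ g̈(t) φ(t) dt`. -/
theorem interpolation_error_weak_limit
    (T : ℝ) (hT : 0 < T) (g : ℝ → ℝ)
    (hg : ContDiffOn ℝ 2 g (Icc 0 T))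
    (hgbd : ∃ C : ℝ, ∀ t ∈ Icc (0:ℝ) T, |deriv (deriv g) t| ≤ C)
    (gn : ℕ → ℝ → ℝ)
    (hgn : ∀ n : ℕ, 0 < n → ∀ k : ℕ, k < n →
      ∀ t ∈ Icc ((k : ℝ) * T / n) (((k : ℝ) + 1) * T / n),
        gn n t = g ((k : ℝ) * T / n) +
          (t - (k : ℝ) * T / n) *
            (g (((k : ℝ) + 1) * T / n) - g ((k : ℝ) * T / n)) / (T / n))
    (φ : ℝ → ℝ) (hφ : IntegrableOn φ (Icc 0 T) volume) :
    Tendsto (fun n : ℕ => ∫ t in Icc (0:ℝ) T, (n : ℝ) ^ 2 * (gn n t - g t) * φ t)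
      atTop (𝓝 (T ^ 2 / 12 * ∫ t in Icc (0:ℝ) T, deriv (deriv g) t * φ t)) := by
  obtain ⟨C, hC⟩ := hgbd
  have hC' (t) (ht : t ∈ Ioo 0 T) := hC t (Ioo_subset_Icc_self ht)
  have hC0 : 0 ≤ C := (abs_nonneg _).trans (hC 0 ⟨le_rfl, hT.le⟩)
  simp_rw [integral_Icc_eq_integral_Ioo]
  replace hφ : IntegrableOn φ (Ioo 0 T) := hφ.mono_set Ioo_subset_Icc_self
  have hcont : ContinuousOn (deriv (deriv g)) (Ioo 0 T) :=
    ((hg.mono Ioo_subset_Icc_self).deriv_of_isOpen isOpen_Ioo (m := 1)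
      (by norm_num)).continuousOn_deriv_of_isOpen isOpen_Ioo le_rfl
  set μ := volume.restrict (Ioo 0 T) with hμ
  have hmem : ∀ᵐ t ∂μ, t ∈ Ioo 0 T := ae_restrict_mem measurableSet_Ioo
  set p : ℕ → ℝ → ℝ := fun n t =>
    Int.fract (1 / T * n * t) * (1 - Int.fract (1 / T * n * t)) with hp
  have hpm (n) : Measurable (p n) := by fun_prop
  have hp0 (n t) : 0 ≤ p n t :=
    mul_nonneg (Int.fract_nonneg _) (sub_nonneg.2 (Int.fract_lt_one _).le)
  have hp1 (n t) : p n t ≤ 1 := by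
    have h0 := Int.fract_nonneg (1 / T * n * t)
    have h1 := (Int.fract_lt_one (1 / T * n * t)).le
    simp only [hp]
    nlinarith
  have hψ : Integrable (fun t => deriv (deriv g) t * φ t) μ :=
    hφ.bdd_mul (c := C) (hcont.aestronglyMeasurable measurableSet_Ioo)
      (hmem.mono fun t ht => hC' t ht)
  have hpψ (n) : Integrable (fun t => T ^ 2 / 2 * (p n t * (deriv (deriv g) t * φ t))) μ := by
    refine Integrable.const_mul
      (hψ.bdd_mul (c := 1) (hpm n).aestronglyMeasurable (ae_of_all _ fun t => ?_)) _
    rw [Real.norm_eq_abs, abs_of_nonneg (hp0 n t)]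
    exact hp1 n t
  -- the oscillating main term, by weak convergence of `p n` to its mean
  have main : Tendsto (fun n : ℕ => ∫ t, T ^ 2 / 2 * (p n t * (deriv (deriv g) t * φ t)) ∂μ) atTop
      (𝓝 (T ^ 2 / 12 * ∫ t, deriv (deriv g) t * φ t ∂μ)) := by
    have h := (tendsto_integral_fract_mul ((integrable_indicator_iff measurableSet_Ioo).2 hψ)
      (c := 1 / T) (by positivity)).const_mul (T ^ 2 / 2)
    rw [integral_indicator measurableSet_Ioo, ← hμ] at h
    convert h using 2 with n
    · rw [integral_const_mul, hμ, ← integral_indicator measurableSet_Ioo]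
      congr 2
      funext t
      by_cases ht : t ∈ Ioo 0 T <;> simp [ht, hp]
    · ring
  -- on `(0, T)` the interpolant is an explicit function of `t` and `⌊n t / T⌋₊`, hence measurable
  have hmeas (n : ℕ) (hn : 0 < n) : AEStronglyMeasurable (gn n) μ := by
    have hF : Measurable fun t : ℝ => (fun k : ℕ => g ((k : ℝ) * T / n)) ⌊1 / T * n * t⌋₊ +
        (t - (fun k : ℕ => (k : ℝ) * T / n) ⌊1 / T * n * t⌋₊) *
        (fun k : ℕ => g (((k : ℝ) + 1) * T / n) - g ((k : ℝ) * T / n)) ⌊1 / T * n * t⌋₊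
          / (T / n) := by
      have hfl (F : ℕ → ℝ) : Measurable fun t : ℝ => F ⌊1 / T * n * t⌋₊ :=
        measurable_from_nat.comp (Nat.measurable_floor.comp (by fun_prop))
      exact (hfl fun k => g ((k : ℝ) * T / n)).add
        (((measurable_id.sub (hfl fun k => (k : ℝ) * T / n)).mul
          (hfl fun k => g (((k : ℝ) + 1) * T / n) - g ((k : ℝ) * T / n))).div_const (T / n))
    refine hF.aestronglyMeasurable.congr (hmem.mono fun t ht => ?_)
    obtain ⟨hk, h1, h2⟩ := floor_cell hT hn ht
    exact (hgn n hn _ hk t ⟨h1, h2.le⟩).symm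
  have hhm (n : ℕ) (hn : 0 < n) :
      AEStronglyMeasurable (fun t => (n : ℝ) ^ 2 * (gn n t - g t)) μ :=
    ((hmeas n hn).sub ((hg.continuousOn.mono Ioo_subset_Icc_self).aestronglyMeasurable
      measurableSet_Ioo)).const_mul _
  have hbd (n : ℕ) (hn : 0 < n) (t) (ht : t ∈ Ioo 0 T) :
      |(n : ℝ) ^ 2 * (gn n t - g t)| ≤ T ^ 2 / 2 * C := by
    obtain ⟨ξ, hξ, -, e⟩ := exists_scaled_error hT hg hn (hgn n hn) ht
    rw [e, mul_assoc, abs_mul, abs_mul, abs_of_nonneg (hp0 n t),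
      abs_of_nonneg (by positivity : 0 ≤ T ^ 2 / 2)]
    refine mul_le_mul_of_nonneg_left ?_ (by positivity)
    exact (mul_le_of_le_one_left (abs_nonneg _) (hp1 n t)).trans (hC' ξ hξ)
  have hhφ (n : ℕ) (hn : 0 < n) : Integrable (fun t => (n : ℝ) ^ 2 * (gn n t - g t) * φ t) μ :=
    hφ.bdd_mul (hhm n hn) (hmem.mono fun t ht => hbd n hn t ht)
  -- replacing `g''(ξ)` by `g''(t)` costs nothing in the limit
  have rem : Tendsto (fun n : ℕ => ∫ t, ((n : ℝ) ^ 2 * (gn n t - g t) * φ t -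
      T ^ 2 / 2 * (p n t * (deriv (deriv g) t * φ t))) ∂μ) atTop (𝓝 (∫ _, 0 ∂μ)) := by
    refine tendsto_integral_filter_of_dominated_convergence
      (fun t => (T ^ 2 / 2 * C + T ^ 2 / 2 * C) * |φ t|) ?_ ?_ (hφ.abs.const_mul _) ?_
    · filter_upwards [eventually_gt_atTop 0] with n hn
      exact ((hhφ n hn).sub (hpψ n)).aestronglyMeasurable
    · filter_upwards [eventually_gt_atTop 0] with n hn
      filter_upwards [hmem] with t ht
      rw [Real.norm_eq_abs, add_mul]
      refine (abs_sub _ _).trans (add_le_add ?_ ?_)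
      · rw [abs_mul]
        exact mul_le_mul_of_nonneg_right (hbd n hn t ht) (abs_nonneg _)
      · rw [← mul_assoc (p n t), ← mul_assoc, abs_mul, abs_mul, abs_mul, abs_of_nonneg (hp0 n t),
          abs_of_nonneg (by positivity : 0 ≤ T ^ 2 / 2)]
        refine mul_le_mul_of_nonneg_right (mul_le_mul_of_nonneg_left ?_ (by positivity))
          (abs_nonneg _)
        exact (mul_le_of_le_one_left (abs_nonneg _) (hp1 n t)).trans (hC' t ht)
    · filter_upwards [hmem] with t ht
      have hcl : ∀ n : ℕ, ∃ ξ, 0 < n → ξ ∈ Ioo 0 T ∧ |ξ - t| ≤ T / n ∧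
          (n : ℝ) ^ 2 * (gn n t - g t) = T ^ 2 / 2 * p n t * deriv (deriv g) ξ := by
        intro n
        by_cases hn : 0 < n
        · obtain ⟨ξ, h⟩ := exists_scaled_error hT hg hn (hgn n hn) ht
          exact ⟨ξ, fun _ => h⟩
        · exact ⟨t, fun h => absurd h hn⟩
      choose ξ hξ using hcl
      have hξt : Tendsto ξ atTop (𝓝 t) := by
        rw [tendsto_iff_dist_tendsto_zero]
        refine squeeze_zero' (Eventually.of_forall fun _ => dist_nonneg) ?_
          (tendsto_const_div_atTop_nhds_zero_nat T)
        filter_upwards [eventually_gt_atTop 0] with n hn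
        exact (hξ n hn).2.1
      have hgt := ((hcont.continuousAt (isOpen_Ioo.mem_nhds ht)).tendsto.comp hξt).sub_const
        (deriv (deriv g) t)
      rw [sub_self] at hgt
      have hlim := (hgt.abs.const_mul (T ^ 2 / 2)).mul_const |φ t|
      rw [abs_zero, mul_zero, zero_mul] at hlim
      refine squeeze_zero_norm' ?_ hlim
      filter_upwards [eventually_gt_atTop 0] with n hn
      rw [(hξ n hn).2.2, show T ^ 2 / 2 * p n t * deriv (deriv g) (ξ n) * φ t -
        T ^ 2 / 2 * (p n t * (deriv (deriv g) t * φ t)) =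
        T ^ 2 / 2 * (p n t * (deriv (deriv g) (ξ n) - deriv (deriv g) t)) * φ t by ring,
        Real.norm_eq_abs, abs_mul, abs_mul, abs_mul, abs_of_nonneg (hp0 n t),
        abs_of_nonneg (by positivity : 0 ≤ T ^ 2 / 2)]
      exact mul_le_mul_of_nonneg_right (mul_le_mul_of_nonneg_left
        (mul_le_of_le_one_left (abs_nonneg _) (hp1 n t)) (by positivity)) (abs_nonneg _)
  rw [integral_zero] at rem
  have := rem.add main
  rw [zero_add] at this
  refine this.congr' ?_
  filter_upwards [eventually_gt_atTop 0] with n hn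
  rw [integral_sub (hhφ n hn) (hpψ n), sub_add_cancel]
end
end

section
/- For every a > 0 and b ∈ ℝ, −∫_{−∞}^{a+b} x · (1 − e^{−2a(a+b−x)}) · φ(x) dx = 2a · e^{−2ab} · Φ(b − a), where φ(x) := e^{−x²/2}/√(2π) is the standard normal density and Φ(z) := ∫_{−∞}^z φ(y) dy is the standard normal distribution function. -/
/-!
Write `g x = exp (-x² / 2) / √(2π)`. Completing the square gives
`exp (-2a(a+b-x)) * g x = exp (-2ab) * g (x - 2a)` (the reflection principle), so the integrand
equals `x g(x) - exp (-2ab) (x - 2a) g(x - 2a) - 2a exp (-2ab) g(x - 2a)`.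
The first two terms have the antiderivative `F x = -g x + exp (-2ab) * g (x - 2a)`, which tends to
`0` at `-∞` and vanishes at `a + b`, so they contribute nothing; the last term is turned into the
distribution function at `b - a` by translating by `2a`.
-/

open MeasureTheory Set Filter Topology Real

noncomputable section

/-- The standard normal density. -/
def stdGauss (x : ℝ) : ℝ := Real.exp (-(x ^ 2 / 2)) / Real.sqrt (2 * Real.pi)

lemma stdGauss_integrable : Integrable stdGauss := by
  have h := (integrable_exp_neg_mul_sq (b := 1 / 2) (by norm_num)).div_const √(2 * π)
  refine h.congr (Eventually.of_forall fun x => ?_)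
  simp only [stdGauss]
  ring_nf

lemma mul_stdGauss_integrable : Integrable fun x => x * stdGauss x := by
  have h := (integrable_mul_exp_neg_mul_sq (b := 1 / 2) (by norm_num)).div_const √(2 * π)
  refine h.congr (Eventually.of_forall fun x => ?_)
  simp only [stdGauss]
  ring_nf

lemma stdGauss_hasDerivAt (x : ℝ) : HasDerivAt stdGauss (-(x * stdGauss x)) x := by
  have h := ((((hasDerivAt_id x).pow 2).div_const 2).neg.exp).div_const √(2 * π)
  refine h.congr_deriv ?_
  simp [stdGauss]
  ring

lemma stdGauss_tendsto_atBot : Tendsto stdGauss atBot (𝓝 0) := by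
  have h0 : Tendsto (fun x : ℝ => x ^ 2) atBot atTop := by
    simpa [Function.comp_def] using
      (tendsto_pow_atTop (α := ℝ) two_ne_zero).comp tendsto_neg_atBot_atTop
  have h := (tendsto_exp_neg_atTop_nhds_zero.comp
    (h0.atTop_div_const two_pos)).div_const √(2 * π)
  rw [zero_div] at h
  exact h

/-- Completing the square in the exponent of the tilted density. -/
lemma exp_mul_stdGauss (a b x : ℝ) :
    Real.exp (-(2 * a * (a + b - x))) * stdGauss x =
      Real.exp (-(2 * a * b)) * stdGauss (x - 2 * a) := by
  simp only [stdGauss, ← mul_div_assoc, ← Real.exp_add]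
  ring_nf

theorem gaussian_linear_boundary_integral (a b : ℝ) (ha : 0 < a) :
    -∫ x in Iio (a + b),
        x * (1 - Real.exp (-(2 * a * (a + b - x)))) *
          (Real.exp (-(x ^ 2 / 2)) / Real.sqrt (2 * Real.pi)) =
      2 * a * Real.exp (-(2 * a * b)) *
        ∫ y in Iio (b - a), Real.exp (-(y ^ 2 / 2)) / Real.sqrt (2 * Real.pi) := by
  change -∫ x in Iio (a + b), x * (1 - Real.exp (-(2 * a * (a + b - x)))) * stdGauss x =
    2 * a * Real.exp (-(2 * a * b)) * ∫ y in Iio (b - a), stdGauss y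
  set c := Real.exp (-(2 * a * b)) with hc
  have hsplit : ∀ x, x * (1 - Real.exp (-(2 * a * (a + b - x)))) * stdGauss x =
      (x * stdGauss x - c * ((x - 2 * a) * stdGauss (x - 2 * a)))
        - 2 * a * c * stdGauss (x - 2 * a) := by
    intro x
    linear_combination (-x) * exp_mul_stdGauss a b x
  have hi1 : Integrable fun x => x * stdGauss x - c * ((x - 2 * a) * stdGauss (x - 2 * a)) :=
    mul_stdGauss_integrable.sub ((mul_stdGauss_integrable.comp_sub_right (2 * a)).const_mul c)
  have hi2 : Integrable fun x => 2 * a * c * stdGauss (x - 2 * a) :=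
    (stdGauss_integrable.comp_sub_right (2 * a)).const_mul _
  have hderiv : ∀ x, HasDerivAt (fun x => -stdGauss x + c * stdGauss (x - 2 * a))
      (x * stdGauss x - c * ((x - 2 * a) * stdGauss (x - 2 * a))) x := by
    intro x
    refine ((stdGauss_hasDerivAt x).neg.add
      (((stdGauss_hasDerivAt (x - 2 * a)).comp_sub_const x (2 * a)).const_mul c)).congr_deriv ?_
    ring
  have hlim : Tendsto (fun x => -stdGauss x + c * stdGauss (x - 2 * a)) atBot (𝓝 0) := by
    have hs : Tendsto (fun x : ℝ => x - 2 * a) atBot atBot :=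
      tendsto_atBot_add_const_right _ _ tendsto_id
    simpa using stdGauss_tendsto_atBot.neg.add
      ((stdGauss_tendsto_atBot.comp hs).const_mul c)
  have hend : -stdGauss (a + b) + c * stdGauss (a + b - 2 * a) = 0 := by
    rw [hc, ← exp_mul_stdGauss]
    simp
  have hzero : ∫ x in Iio (a + b),
      (x * stdGauss x - c * ((x - 2 * a) * stdGauss (x - 2 * a))) = 0 := by
    rw [← integral_Iic_eq_integral_Iio,
      integral_Iic_of_hasDerivAt_of_tendsto' (fun x _ => hderiv x) hi1.integrableOn hlim,
      hend, sub_zero]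
  have htrans : ∫ x in Iio (a + b), stdGauss (x - 2 * a) = ∫ y in Iio (b - a), stdGauss y := by
    rw [← (measurePreserving_sub_right volume (2 * a)).setIntegral_preimage_emb
      (measurableEmbedding_subRight (2 * a)) stdGauss (Iio (b - a)), preimage_sub_const_Iio]
    ring_nf
  simp_rw [hsplit]
  rw [integral_sub hi1.integrableOn hi2.integrableOn, hzero, integral_const_mul, htrans]
  ring
end
end
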